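/- Let Ω ⊂ ℂ be a bounded lemniscate domain, let z₀ ∈ Ω, set γ := ∂Ω, and let ε > 0. Then there exists δ > 0 such that: for every continuous injective map h : γ → ℂ with sup_{z ∈ γ} |h(z) − z| < δ, letting Ω_h be the connected component of ℂ \ h(γ) containing z₀, the normalized Riemann maps φ, φ_h : closure(𝔻) → ℂ (continuous on closure(𝔻), injective and holomorphic on 𝔻, with φ(𝔻) = Ω, φ_h(𝔻) = Ω_h, φ(0) = φ_h(0) = z₀, and φ′(0), φ_h′(0) real and positive) satisfy sup_{z ∈ closure(𝔻)} |φ(z) − φ_h(z)| < ε. -/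

import Mathlib

open Set Metric Topology Filter Polynomial

noncomputable section

/-- A Jordan curve: a set homeomorphic to the unit circle. -/
def IsJordanCurve {X : Type*} [TopologicalSpace X] (E : Set X) : Prop :=
  Nonempty (E ≃ₜ (Metric.sphere (0 : ℂ) 1 : Set ℂ))

/-- A simple arc: a set homeomorphic to the open unit interval `(0,1)`. -/
def IsSimpleArc {X : Type*} [TopologicalSpace X] (E : Set X) : Prop :=
  Nonempty (E ≃ₜ (Set.Ioo (0 : ℝ) 1 : Set ℝ))

/-- The connected components of a set. -/
def setComponents {X : Type*} [TopologicalSpace X] (A : Set X) : Set (Set X) :=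
  {C | ∃ x ∈ A, C = connectedComponentIn A x}

/-- The edges of the pair `(G, V)`: the connected components of `G \ V`. -/
def graphEdges {X : Type*} [TopologicalSpace X] (G V : Set X) : Set (Set X) :=
  setComponents (G \ V)

/-- The degree of a vertex `v`: the number of edges `e` with `v ∈ closure e \ e`,
where an edge is counted twice if `closure e \ e = {v}`. -/
def vertexDegree {X : Type*} [TopologicalSpace X] (G V : Set X) (v : X) : ℕ :=
  {e ∈ graphEdges G V | v ∈ closure e \ e}.ncard +
    {e ∈ graphEdges G V | closure e \ e = {v}}.ncard

/-- `G` is a lemniscate graph with (finite) vertex set `V`. -/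
structure IsLemniscateGraphWith {X : Type*} [TopologicalSpace X] (G V : Set X) : Prop where
  vertex_subset : V ⊆ G
  vertex_finite : V.Finite
  edges_finite : (graphEdges G V).Finite
  edge_shape : ∀ e ∈ graphEdges G V, IsJordanCurve e ∨ (IsSimpleArc e ∧ closure e \ e ⊆ V)
  degree_even : ∀ v ∈ V, Even (vertexDegree G V v)
  degree_ge_four : ∀ v ∈ V, 4 ≤ vertexDegree G V v

/-- `G` is a lemniscate graph (for some finite vertex set). -/
def IsLemniscateGraph {X : Type*} [TopologicalSpace X] (G : Set X) : Prop :=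
  ∃ V, IsLemniscateGraphWith G V

/-- The faces of `G`: the connected components of the complement of `G`. -/
def graphFaces {X : Type*} [TopologicalSpace X] (G : Set X) : Set (Set X) :=
  setComponents Gᶜ

/-- A 2-coloring of the faces of `G`, recorded by the set `grey` of grey faces:
two distinct faces whose closures share a common edge get different colors. -/
def IsTwoColoring {X : Type*} [TopologicalSpace X] (G V : Set X) (grey : Set (Set X)) : Prop :=
  grey ⊆ graphFaces G ∧
    ∀ F₁ ∈ graphFaces G, ∀ F₂ ∈ graphFaces G, F₁ ≠ F₂ →
      (∃ e ∈ graphEdges G V, e ⊆ closure F₁ ∧ e ⊆ closure F₂) →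
      (F₁ ∈ grey ↔ F₂ ∉ grey)

/-- The distance function of a metric space structure on the Riemann sphere. -/
def mdist (m : MetricSpace (OnePoint ℂ)) : OnePoint ℂ → OnePoint ℂ → ℝ :=
  m.toPseudoMetricSpace.toDist.dist

/-- The metric space structure `m` induces the standard topology of the Riemann sphere. -/
def InducesSphereTopology (m : MetricSpace (OnePoint ℂ)) : Prop :=
  m.toPseudoMetricSpace.toUniformSpace.toTopologicalSpace =
    (inferInstance : TopologicalSpace (OnePoint ℂ))

/-- `E` and `F` are `ε`-homeomorphic with respect to the metric `m`: there is a
homeomorphism of the sphere carrying `E` to `F` and moving points less than `ε`. -/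
def EpsHomeomorphic (m : MetricSpace (OnePoint ℂ)) (ε : ℝ) (E F : Set (OnePoint ℂ)) : Prop :=
  ∃ φ : OnePoint ℂ ≃ₜ OnePoint ℂ, φ '' E = F ∧ ∃ c < ε, ∀ z, mdist m (φ z) z ≤ c

/-- `r` is a rational map on the Riemann sphere: the continuous extension of `p/q`
for coprime polynomials `p`, `q`, not both constant. -/
def IsRationalMap (r : OnePoint ℂ → OnePoint ℂ) : Prop :=
  Continuous r ∧ ∃ p q : ℂ[X], IsCoprime p q ∧ ¬(p.natDegree = 0 ∧ q.natDegree = 0) ∧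
    ∀ z : ℂ, q.eval z ≠ 0 → r (z : OnePoint ℂ) = ((p.eval z / q.eval z : ℂ) : OnePoint ℂ)

/-- The lemniscate of `r` : the preimage of the unit circle. -/
def lemniscate (r : OnePoint ℂ → OnePoint ℂ) : Set (OnePoint ℂ) :=
  r ⁻¹' ((fun w : ℂ => (w : OnePoint ℂ)) '' {w : ℂ | ‖w‖ = 1})

/-- The copy of a planar set inside the Riemann sphere. -/
def toSphere (s : Set ℂ) : Set (OnePoint ℂ) := (fun z : ℂ => (z : OnePoint ℂ)) '' s


/-- A lemniscate domain: a simply connected open set whose boundary is a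
lemniscate graph. -/
def IsLemniscateDomain (Ω : Set ℂ) : Prop :=
  IsOpen Ω ∧ SimplyConnectedSpace Ω ∧ IsLemniscateGraph (frontier Ω)

/-!
On compact subsets of the disc the two Riemann maps are compared through the transition maps
`φ⁻¹ ∘ φ_h` and `φ_h⁻¹ ∘ φ`: both are self-maps of nearly the whole disc fixing `0` whose
derivatives there are positive and nearly reciprocal, so by the Schwarz lemma and Harnack's
inequality they are close to the identity.

Near the unit circle one works in the coordinate `s`, `z = exp s`. On a thin boundary layer the
length-area method produces, on both sides of a given radius, a radius whose `φ_h`-image is short.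
The ends of these two images are close points of `h(∂Ω)`, hence are joined by a small connected
subset of `h(∂Ω)`, since `∂Ω`, being a continuous image of the circle, is uniformly locally
connected. A point of the layer with image outside a disc `E` containing all this would have an
image separated from `z₀` by `h(∂Ω)`; the separation is detected by continuous logarithms of
`w ↦ w - a`, which glue along a connected set.
-/

section InjectiveHolomorphic

variable {f : ℂ → ℂ} {U : Set ℂ} {z : ℂ}

theorem not_eventually_eq_const_of_injOn (hU : U ∈ 𝓝 z) (hinj : InjOn f U) :
    ¬ ∀ᶠ x in 𝓝 z, f x = f z := by
  intro hconst
  have hpunctured : ∀ᶠ x in 𝓝[≠] z, f x = f z ∧ x ∈ U := nhdsWithin_le_nhds (hconst.and hU)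
  obtain ⟨x, ⟨hx, hxU⟩, hxz⟩ := (hpunctured.and self_mem_nhdsWithin).exists
  exact hxz (hinj hxU (mem_of_mem_nhds hU) hx)

theorem map_nhds_eq_of_injOn (hU : U ∈ 𝓝 z) (hf : DifferentiableOn ℂ f U) (hinj : InjOn f U) :
    Filter.map f (𝓝 z) = 𝓝 (f z) :=
  le_antisymm (hf.differentiableAt hU).continuousAt
    ((hf.analyticAt hU).eventually_constant_or_nhds_le_map_nhds.resolve_left
      (not_eventually_eq_const_of_injOn hU hinj))

theorem eventually_deriv_ne_zero_of_injOn (hU : U ∈ 𝓝 z) (hf : DifferentiableOn ℂ f U)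
    (hinj : InjOn f U) : ∀ᶠ x in 𝓝[≠] z, deriv f x ≠ 0 := by
  refine (hf.analyticAt hU).deriv.eventually_eq_zero_or_eventually_ne_zero.resolve_left
    fun hderiv => not_eventually_eq_const_of_injOn hU hinj ?_
  obtain ⟨ε, hε, hball⟩ :=
    Metric.eventually_nhds_iff_ball.1 (hderiv.and (eventually_mem_nhds_iff.2 hU))
  filter_upwards [ball_mem_nhds z hε] with x hx
  exact isOpen_ball.is_const_of_deriv_eq_zero (convex_ball z ε).isPreconnected
    (fun y hy => (hf.differentiableAt (hball y hy).2).differentiableWithinAt)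
    (fun y hy => (hball y hy).1) hx (mem_ball_self hε)

theorem isOpen_image_of_injOn (hU : IsOpen U) (hf : DifferentiableOn ℂ f U) (hinj : InjOn f U) :
    IsOpen (f '' U) := by
  rw [isOpen_iff_mem_nhds]
  rintro _ ⟨x, hx, rfl⟩
  rw [← map_nhds_eq_of_injOn (hU.mem_nhds hx) hf hinj]
  exact image_mem_map (hU.mem_nhds hx)

theorem continuousOn_invFunOn_image (hU : IsOpen U) (hf : DifferentiableOn ℂ f U)
    (hinj : InjOn f U) : ContinuousOn (Function.invFunOn f U) (f '' U) := by
  rintro _ ⟨x, hx, rfl⟩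
  have hinv : ∀ᶠ y in 𝓝 x, Function.invFunOn f U (f y) = y := by
    filter_upwards [hU.mem_nhds hx] with y hy using hinj.leftInvOn_invFunOn hy
  refine ContinuousAt.continuousWithinAt ?_
  rw [ContinuousAt, ← map_nhds_eq_of_injOn (hU.mem_nhds hx) hf hinj, hinv.self_of_nhds,
    tendsto_map'_iff]
  exact tendsto_id.congr' (hinv.mono fun y hy => hy.symm)

/- Where `f' ≠ 0` the inverse is differentiable, and the zeros of `f'` are isolated, so they give
removable singularities of the inverse. -/
theorem differentiableOn_invFunOn_image (hU : IsOpen U) (hf : DifferentiableOn ℂ f U)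
    (hinj : InjOn f U) : DifferentiableOn ℂ (Function.invFunOn f U) (f '' U) := by
  have hcont : ∀ x ∈ U, ContinuousAt (Function.invFunOn f U) (f x) := fun x hx =>
    (continuousOn_invFunOn_image hU hf hinj).continuousAt
      ((isOpen_image_of_injOn hU hf hinj).mem_nhds (mem_image_of_mem f hx))
  rintro _ ⟨x, hx, rfl⟩
  refine (Complex.analyticAt_of_differentiable_on_punctured_nhds_of_continuousAt ?_
    (hcont x hx)).differentiableAt.differentiableWithinAt
  rw [eventually_nhdsWithin_iff, ← map_nhds_eq_of_injOn (hU.mem_nhds hx) hf hinj, eventually_map]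
  filter_upwards [hU.mem_nhds hx,
    eventually_nhdsWithin_iff.1 (eventually_deriv_ne_zero_of_injOn (hU.mem_nhds hx) hf hinj)]
    with y hy hderiv hne
  have hleft := hinj.leftInvOn_invFunOn hy
  refine (HasDerivAt.of_local_left_inverse (f := f) (f' := deriv f y) (hcont y hy) ?_
    (hderiv fun h => hne (congrArg f h)) ?_).differentiableAt
  · rw [hleft]
    exact (hf.differentiableAt (hU.mem_nhds hy)).hasDerivAt
  · filter_upwards [(isOpen_image_of_injOn hU hf hinj).mem_nhds (mem_image_of_mem f hy)] with w hw
    exact Function.invFunOn_eq hw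

theorem deriv_ne_zero_of_injOn (hU : IsOpen U) (hf : DifferentiableOn ℂ f U)
    (hinj : InjOn f U) (hz : z ∈ U) : deriv f z ≠ 0 := by
  intro hderiv
  have hinv := (differentiableOn_invFunOn_image hU hf hinj).differentiableAt
    ((isOpen_image_of_injOn hU hf hinj).mem_nhds (mem_image_of_mem f hz))
  have hcomp := hinv.hasDerivAt.comp z (hf.differentiableAt (hU.mem_nhds hz)).hasDerivAt
  rw [hderiv, mul_zero] at hcomp
  have hid : Function.invFunOn f U ∘ f =ᶠ[𝓝 z] id := by
    filter_upwards [hU.mem_nhds hz] with y hy using hinj.leftInvOn_invFunOn hy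
  exact one_ne_zero ((hasDerivAt_id z).unique (hcomp.congr_of_eventuallyEq hid.symm))

end InjectiveHolomorphic

section Schwarz

variable {R : ℝ} {z : ℂ}

theorem exists_differentiableOn_exp_eq {F : ℂ → ℂ} (hF : DifferentiableOn ℂ F (ball 0 R))
    (h0 : ∀ z ∈ ball (0 : ℂ) R, F z ≠ 0) :
    ∃ P : ℂ → ℂ, DifferentiableOn ℂ P (ball 0 R) ∧
      ∀ z ∈ ball (0 : ℂ) R, Complex.exp (P z) = F z := by
  rcases le_or_gt R 0 with hR | hR
  · exact ⟨0, by simp [ball_eq_empty.2 hR]⟩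
  have h0R : (0 : ℂ) ∈ ball (0 : ℂ) R := mem_ball_self hR
  obtain ⟨P, hP0, hP⟩ :=
    ((hF.deriv isOpen_ball).div hF h0).isExactOn_ball.with_val_at 0 (Complex.log (F 0))
  have hderiv : ∀ z ∈ ball (0 : ℂ) R,
      HasDerivAt (fun z => F z * Complex.exp (-P z)) 0 z := fun z hz => by
    have hFz := (hF.differentiableAt (isOpen_ball.mem_nhds hz)).hasDerivAt
    refine (hFz.mul (hP z hz).fun_neg.cexp).congr_deriv ?_
    have := h0 z hz
    simp only [Pi.div_apply]
    field_simp
    ring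
  refine ⟨P, fun z hz => (hP z hz).differentiableAt.differentiableWithinAt, fun z hz => ?_⟩
  have hconst := isOpen_ball.is_const_of_deriv_eq_zero (convex_ball (0 : ℂ) R).isPreconnected
    (fun z hz => (hderiv z hz).differentiableAt.differentiableWithinAt)
    (fun z hz => (hderiv z hz).deriv) hz h0R
  rwa [hP0, Complex.exp_neg, Complex.exp_neg, Complex.exp_log (h0 0 h0R),
    mul_inv_cancel₀ (h0 0 h0R), mul_inv_eq_one₀ (Complex.exp_ne_zero _), eq_comm] at hconst

theorem norm_sub_le_of_re_nonneg {p : ℂ → ℂ} {M : ℝ} (hM : 0 < M)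
    (hp : DifferentiableOn ℂ p (ball 0 R)) (hre : ∀ z ∈ ball (0 : ℂ) R, 0 ≤ (p z).re)
    (h0 : (p 0).re ≤ M) (hz : z ∈ ball (0 : ℂ) R) :
    ‖p z - p 0‖ ≤ 2 * M * ‖z‖ / (R - ‖z‖) := by
  have hmaps : MapsTo (fun w => p 0 - p w) (ball 0 R) {w | w.re ≤ M} := fun w hw => by
    simp only [mem_ofPred_eq, Complex.sub_re]
    linarith [hre w hw]
  simpa only [norm_sub_rev] using Complex.borelCaratheodory_zero hM (hp.const_sub _) hmaps
    (pos_of_mem_ball hz) hz (sub_self _)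

/- Harnack's inequality for the nonnegative harmonic function `M + log ‖F 0‖ - log ‖F‖`. -/
theorem exp_neg_mul_norm_le_norm {F : ℂ → ℂ} {M : ℝ} (hM : 0 < M)
    (hF : DifferentiableOn ℂ F (ball 0 R)) (h0 : ∀ z ∈ ball (0 : ℂ) R, F z ≠ 0)
    (hbound : ∀ z ∈ ball (0 : ℂ) R, ‖F z‖ ≤ Real.exp M * ‖F 0‖) (hz : z ∈ ball (0 : ℂ) R) :
    Real.exp (-(2 * M * ‖z‖ / (R - ‖z‖))) * ‖F 0‖ ≤ ‖F z‖ := by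
  have h0R : (0 : ℂ) ∈ ball (0 : ℂ) R := mem_ball_self (pos_of_mem_ball hz)
  obtain ⟨P, hP, hexp⟩ := exists_differentiableOn_exp_eq hF h0
  have hnorm : ∀ w ∈ ball (0 : ℂ) R, ‖F w‖ = Real.exp (P w).re := fun w hw => by
    rw [← hexp w hw, Complex.norm_exp]
  have hosc := norm_sub_le_of_re_nonneg (p := fun w => M + P 0 - P w) hM (hP.const_sub _)
    (fun w hw => ?_) (by simp) hz
  · have hre := (Complex.re_le_norm _).trans hosc
    rw [hnorm z hz, hnorm 0 h0R, ← Real.exp_add, Real.exp_le_exp]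
    simp only [Complex.add_re, Complex.sub_re, Complex.ofReal_re] at hre
    linarith
  · have hw' := hbound w hw
    rw [hnorm w hw, hnorm 0 h0R, ← Real.exp_add, Real.exp_le_exp] at hw'
    simp only [Complex.add_re, Complex.sub_re, Complex.ofReal_re]
    linarith

theorem exists_pos_forall_le_norm_of_ne_zero (T : ℝ) {d r : ℝ} (hd : 0 < d) (hr : r < 1) :
    ∃ c > 0, ∀ F : ℂ → ℂ, DifferentiableOn ℂ F (ball 0 1) → (∀ z ∈ ball (0 : ℂ) 1, F z ≠ 0) →
      (∀ z ∈ ball (0 : ℂ) 1, ‖F z‖ ≤ T) → d ≤ ‖F 0‖ → ∀ z ∈ ball (0 : ℂ) r, c ≤ ‖F z‖ := by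
  set M := |T| / d + 1
  have hM : 0 < M := by positivity
  refine ⟨Real.exp (-(2 * M * r / (1 - r))) * d, by positivity, fun F hF h0 hT hdF z hz => ?_⟩
  have hzr : ‖z‖ < r := mem_ball_zero_iff.1 hz
  have hT' : T ≤ Real.exp M * d :=
    calc T ≤ |T| / d * d := (le_abs_self T).trans_eq (div_mul_cancel₀ _ hd.ne').symm
      _ ≤ Real.exp M * d := by gcongr; linarith [Real.add_one_le_exp M]
  refine le_trans ?_ (exp_neg_mul_norm_le_norm hM hF h0 (fun w hw => ?_)
    (ball_subset_ball hr.le hz))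
  · have : 0 < 1 - r := by linarith
    have : 0 ≤ r := (norm_nonneg z).trans hzr.le
    gcongr
  · exact (hT w hw).trans (hT'.trans (by gcongr))

theorem norm_sub_self_le_of_le_deriv_zero {k : ℂ → ℂ} {r a : ℝ} (hr1 : r < 1)
    (hk : DifferentiableOn ℂ k (ball 0 r)) (hmaps : MapsTo k (ball 0 r) (ball 0 1))
    (hk0 : k 0 = 0) (hka : deriv k 0 = a) (hra : r ≤ a) (hz : z ∈ ball (0 : ℂ) r) :
    ‖k z - z‖ ≤ 2 * (1 / r - r) / (r - ‖z‖) + (1 / r - r) := by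
  have hr : 0 < r := pos_of_mem_ball hz
  have h0 : (0 : ℂ) ∈ ball (0 : ℂ) r := mem_ball_self hr
  have h1r : 1 < 1 / r := one_lt_one_div hr hr1
  have hM : 0 < 1 / r - r := by linarith
  have hzr : ‖z‖ < r := by simpa using hz
  have hslope : ∀ z ∈ ball (0 : ℂ) r, ‖dslope k 0 z‖ ≤ 1 / r := fun z hz =>
    Complex.norm_dslope_le_div_of_mapsTo_ball hk
      (hk0.symm ▸ hmaps.mono_right ball_subset_closedBall) hz
  have hslope0 : dslope k 0 0 = a := by rw [dslope_same, hka]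
  have ha : |a - 1| ≤ 1 / r - r := by
    have := hslope 0 h0
    rw [hslope0, Complex.norm_real, Real.norm_eq_abs] at this
    rw [abs_le]
    constructor <;> linarith [le_abs_self a]
  have hosc : ‖dslope k 0 z - a‖ ≤ 2 * (1 / r - r) * ‖z‖ / (r - ‖z‖) := by
    have := norm_sub_le_of_re_nonneg (p := fun z => ((1 / r : ℝ) : ℂ) - dslope k 0 z) hM
      (((Complex.differentiableOn_dslope (isOpen_ball.mem_nhds h0)).2 hk).const_sub _)
      (fun w hw => ?_) ?_ hz
    · simpa only [sub_sub_sub_cancel_left, hslope0, norm_sub_rev] using this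
    · simpa using (Complex.re_le_norm _).trans (hslope w hw)
    · simpa only [Complex.sub_re, Complex.ofReal_re, hslope0, sub_le_sub_iff_left] using hra
  have hkz : k z - z = z * ((dslope k 0 z - a) + (a - 1)) := by
    have := sub_smul_dslope k 0 z
    simp only [hk0, sub_zero, smul_eq_mul] at this
    linear_combination -this
  have hsub : 0 < r - ‖z‖ := by linarith
  calc ‖k z - z‖ ≤ 1 * (‖dslope k 0 z - a‖ + ‖((a - 1 : ℝ) : ℂ)‖) := by
        rw [hkz, norm_mul]
        push_cast
        gcongr
        · linarith
        · exact norm_add_le _ _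
    _ ≤ 2 * (1 / r - r) * ‖z‖ / (r - ‖z‖) + (1 / r - r) := by
        rw [one_mul, Complex.norm_real]
        exact add_le_add hosc ha
    _ ≤ 2 * (1 / r - r) / (r - ‖z‖) + (1 / r - r) := by
        have := mul_le_of_le_one_right (mul_pos two_pos hM).le (hzr.le.trans hr1.le)
        exact add_le_add_left (div_le_div_of_nonneg_right this hsub.le) _

end Schwarz

section FrontierComponent

variable {X : Type*}

theorem frontier_connectedComponentIn_compl_subset [TopologicalSpace X] [LocallyConnectedSpace X]
    {K : Set X} (hK : IsClosed K) (x : X) : frontier (connectedComponentIn Kᶜ x) ⊆ K := by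
  intro y hy
  by_contra hyK
  rw [hK.isOpen_compl.connectedComponentIn.frontier_eq] at hy
  have hyy : y ∈ connectedComponentIn Kᶜ y := mem_connectedComponentIn hyK
  obtain ⟨w, hwy, hwx⟩ :=
    mem_closure_iff.1 hy.1 _ hK.isOpen_compl.connectedComponentIn hyy
  exact hy.2 (connectedComponentIn_eq hwx ▸ connectedComponentIn_eq hwy ▸ hyy)

theorem subset_of_isPreconnected_of_disjoint_frontier [TopologicalSpace X] {S W : Set X}
    (hS : IsPreconnected S) (hd : Disjoint S (frontier W)) (hne : (S ∩ W).Nonempty) : S ⊆ W := by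
  have hcover : S ⊆ interior W ∪ (closure W)ᶜ := fun x hx => by
    by_cases hxW : x ∈ closure W
    · exact Or.inl (by_contra fun h => disjoint_left.1 hd hx ⟨hxW, h⟩)
    · exact Or.inr hxW
  have hint : (S ∩ interior W).Nonempty := hne.imp fun x hx =>
    ⟨hx.1, (hcover hx.1).resolve_right (not_not_intro (subset_closure hx.2))⟩
  exact (hS.subset_left_of_subset_union isOpen_interior isClosed_closure.isOpen_compl
    (disjoint_compl_right.mono_left interior_subset_closure) hcover hint).trans interior_subset

theorem connectedComponentIn_compl_frontier_eq [TopologicalSpace X] {W : Set X} (hW : IsOpen W)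
    (hc : IsPreconnected W) {x : X} (hx : x ∈ W) : connectedComponentIn (frontier W)ᶜ x = W := by
  have hWd : W ⊆ (frontier W)ᶜ := (disjoint_frontier_iff_isOpen.2 hW).subset_compl_left
  refine (subset_of_isPreconnected_of_disjoint_frontier isPreconnected_connectedComponentIn ?_
    ⟨x, mem_connectedComponentIn (hWd hx), hx⟩).antisymm (hc.subset_connectedComponentIn hx hWd)
  exact disjoint_left.2 fun y hy => connectedComponentIn_subset _ _ hy

theorem exists_pos_forall_subset_connectedComponentIn_compl_image [MetricSpace X] {C K : Set X}
    (hC : IsCompact C) (hCc : IsPreconnected C) (hK : IsClosed K) (hd : Disjoint C K) :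
    ∃ δ > 0, ∀ h : X → X, (∀ x ∈ K, dist (h x) x < δ) →
      ∀ y ∈ C, C ⊆ connectedComponentIn (h '' K)ᶜ y := by
  obtain ⟨δ, hδ, hdist⟩ := exists_pos_forall_lt_edist hC hK hd
  refine ⟨δ, hδ, fun h hclose y hy => hCc.subset_connectedComponentIn hy ?_⟩
  rintro _ hC ⟨x, hx, rfl⟩
  have hlt := hdist _ hC x hx
  rw [edist_nndist, ENNReal.coe_lt_coe, ← NNReal.coe_lt_coe, coe_nndist] at hlt
  exact hlt.not_gt (hclose x hx)

theorem image_subset_closedBall_add [PseudoMetricSpace X] {K : Set X} {c : X} {M δ : ℝ}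
    (hK : K ⊆ closedBall c M) {h : X → X} (hclose : ∀ x ∈ K, dist (h x) x ≤ δ) :
    h '' K ⊆ closedBall c (M + δ) := by
  rintro _ ⟨x, hx, rfl⟩
  exact (dist_triangle _ x _).trans (by linarith [hclose x hx, mem_closedBall.1 (hK hx)])

theorem subset_closedBall_of_frontier_subset {W : Set ℂ} (hW : Bornology.IsBounded W) {c : ℂ}
    {M : ℝ} (hM : frontier W ⊆ closedBall c M) : W ⊆ closedBall c M := fun _ hx =>
  mem_closedBall_iff_norm.2 <| Complex.norm_le_of_forall_mem_frontier_norm_le (f := (· - c)) hW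
    (differentiable_id.sub_const c).diffContOnCl (fun _ hy => mem_closedBall_iff_norm.1 (hM hy))
    (subset_closure hx)

end FrontierComponent

/-- `f` is a Riemann map of `W` which extends continuously to the closed unit disc. The values of
`f` off the closed disc are arbitrary. -/
structure IsRiemannMap (f : ℂ → ℂ) (W : Set ℂ) : Prop where
  continuousOn : ContinuousOn f (closure (ball (0 : ℂ) 1))
  differentiableOn : DifferentiableOn ℂ f (ball (0 : ℂ) 1)
  injOn : InjOn f (ball (0 : ℂ) 1)
  image_eq : f '' ball (0 : ℂ) 1 = W

/-- `f` is the Riemann map of `W` normalized by `f 0 = z₀` and `f' 0 > 0`. -/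
structure IsNormalizedRiemannMap (f : ℂ → ℂ) (W : Set ℂ) (z₀ : ℂ) : Prop
    extends IsRiemannMap f W where
  map_zero : f 0 = z₀
  deriv_zero : ∃ a : ℝ, 0 < a ∧ deriv f 0 = (a : ℂ)

theorem zero_mem_unitBall : (0 : ℂ) ∈ ball (0 : ℂ) 1 := mem_ball_self one_pos

theorem isCompact_closure_unitBall : IsCompact (closure (ball (0 : ℂ) 1)) := by
  rw [closure_ball _ one_ne_zero]
  exact isCompact_closedBall _ _

namespace IsRiemannMap

variable {f : ℂ → ℂ} {W : Set ℂ}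

theorem isOpen (hf : IsRiemannMap f W) : IsOpen W :=
  hf.image_eq ▸ isOpen_image_of_injOn isOpen_ball hf.differentiableOn hf.injOn

theorem isPreconnected (hf : IsRiemannMap f W) : IsPreconnected W :=
  hf.image_eq ▸ (convex_ball _ _).isPreconnected.image _ hf.differentiableOn.continuousOn

theorem mapsTo (hf : IsRiemannMap f W) : MapsTo f (ball 0 1) W :=
  mapsTo_iff_image_subset.2 hf.image_eq.subset

theorem isBounded (hf : IsRiemannMap f W) : Bornology.IsBounded W :=
  hf.image_eq ▸ (isCompact_closure_unitBall.image_of_continuousOn hf.continuousOn).isBounded.subset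
    (image_mono subset_closure)

theorem isCompact_frontier (hf : IsRiemannMap f W) : IsCompact (frontier W) :=
  hf.isBounded.isCompact_closure.of_isClosed_subset isClosed_frontier frontier_subset_closure

theorem uniformContinuousOn (hf : IsRiemannMap f W) :
    UniformContinuousOn f (closure (ball (0 : ℂ) 1)) :=
  isCompact_closure_unitBall.uniformContinuousOn_of_continuous hf.continuousOn

theorem map_mem_frontier (hf : IsRiemannMap f W) {ζ : ℂ} (hζ : ζ ∈ sphere (0 : ℂ) 1) :
    f ζ ∈ frontier W := by
  have hζc : ζ ∈ closure (ball (0 : ℂ) 1) :=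
    closure_ball (0 : ℂ) one_ne_zero ▸ sphere_subset_closedBall hζ
  rw [hf.isOpen.frontier_eq, ← hf.image_eq]
  refine ⟨hf.continuousOn.image_closure (mem_image_of_mem f hζc), ?_⟩
  rintro ⟨x, hx, hxζ⟩
  obtain ⟨A, B, hA, hB, hxA, hζB, hAB⟩ := t2_separation (sphere_disjoint_ball.ne_of_mem hζ hx).symm
  have hfA : f '' (A ∩ ball 0 1) ∈ 𝓝 (f ζ) := by
    rw [← hxζ, ← map_nhds_eq_of_injOn (isOpen_ball.mem_nhds hx) hf.differentiableOn hf.injOn]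
    exact image_mem_map (inter_mem (hA.mem_nhds hxA) (isOpen_ball.mem_nhds hx))
  have hlim : Tendsto f (𝓝[ball 0 1] ζ) (𝓝 (f ζ)) := (hf.continuousOn ζ hζc).mono subset_closure
  have : (𝓝[ball (0 : ℂ) 1] ζ).NeBot := mem_closure_iff_nhdsWithin_neBot.1 hζc
  obtain ⟨y, ⟨⟨x', hx', hxy⟩, hyB⟩, hy⟩ := (((hlim.eventually hfA).and
    (nhdsWithin_le_nhds (hB.mem_nhds hζB))).and self_mem_nhdsWithin).exists
  exact disjoint_left.1 hAB hx'.1 (hf.injOn hx'.2 hy hxy ▸ hyB)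

theorem exists_pos_mapsTo_connectedComponentIn_compl_image (hf : IsRiemannMap f W) {r : ℝ}
    (hr : r < 1) : ∃ δ > 0, ∀ h : ℂ → ℂ, (∀ x ∈ frontier W, dist (h x) x < δ) →
      MapsTo f (ball 0 r) (connectedComponentIn (h '' frontier W)ᶜ (f 0)) := by
  have hsub : closedBall (0 : ℂ) r ⊆ ball 0 1 := closedBall_subset_ball hr
  have hcont : ContinuousOn f (closedBall 0 r) := hf.differentiableOn.continuousOn.mono hsub
  obtain ⟨δ, hδ, hcomp⟩ := exists_pos_forall_subset_connectedComponentIn_compl_image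
    ((isCompact_closedBall _ _).image_of_continuousOn hcont)
    ((convex_closedBall _ _).isPreconnected.image _ hcont) isClosed_frontier
    ((disjoint_frontier_iff_isOpen.2 hf.isOpen).symm.mono_left
      (hf.mapsTo.mono_left hsub).image_subset)
  exact ⟨δ, hδ, fun h hclose z hz => hcomp h hclose _
    (mem_image_of_mem f (mem_closedBall_self (pos_of_mem_ball hz).le))
    (mem_image_of_mem f (ball_subset_closedBall hz))⟩

end IsRiemannMap

theorem exists_pos_mapsTo_of_isRiemannMap_displaced {Ω : Set ℂ} {z₀ : ℂ} (hΩ : IsOpen Ω)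
    (hb : Bornology.IsBounded Ω) (hz₀ : z₀ ∈ Ω) {r : ℝ} (hr : r < 1) :
    ∃ δ > 0, ∀ h f : ℂ → ℂ, ContinuousOn h (frontier Ω) →
      (∀ x ∈ frontier Ω, dist (h x) x < δ) →
      IsRiemannMap f (connectedComponentIn (h '' frontier Ω)ᶜ z₀) → f 0 = z₀ →
      MapsTo f (ball 0 r) Ω := by
  have hγ : IsCompact (frontier Ω) :=
    hb.isCompact_closure.of_isClosed_subset isClosed_frontier frontier_subset_closure
  obtain ⟨M, hM⟩ := hγ.isBounded.subset_closedBall z₀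
  obtain ⟨d, hd0, hd⟩ := Metric.isOpen_iff.1 hΩ z₀ hz₀
  obtain ⟨c, hc0, hc⟩ := exists_pos_forall_le_norm_of_ne_zero (2 * (M + 1)) (half_pos hd0) hr
  refine ⟨min (min 1 (d / 2)) c, by positivity, fun h f hh hclose hf hf0 => ?_⟩
  simp only [lt_min_iff] at hclose
  have hK : h '' frontier Ω ⊆ closedBall z₀ (M + 1) :=
    image_subset_closedBall_add hM fun x hx => (hclose x hx).1.1.le
  have hfM : ∀ z ∈ ball (0 : ℂ) 1, dist (f z) z₀ ≤ M + 1 := fun z hz =>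
    subset_closedBall_of_frontier_subset hf.isBounded
      ((frontier_connectedComponentIn_compl_subset (hγ.image_of_continuousOn hh).isClosed z₀).trans
        hK) (hf.mapsTo hz)
  have hfar : ∀ x ∈ frontier Ω, ∀ z ∈ ball (0 : ℂ) r, c ≤ ‖f z - h x‖ := fun x hx => by
    have hxK : h x ∈ h '' frontier Ω := mem_image_of_mem h hx
    refine hc (f · - h x) (hf.differentiableOn.sub_const (h x)) (fun w hw he => ?_)
      (fun w hw => ?_) ?_
    · exact connectedComponentIn_subset _ _ (hf.mapsTo hw) (sub_eq_zero.1 he ▸ hxK)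
    · rw [← dist_eq_norm]
      linarith [dist_triangle_right (f w) (h x) z₀, hfM w hw, mem_closedBall.1 (hK hxK)]
    · have hxd : d ≤ dist x z₀ := not_lt.1 fun hlt =>
        disjoint_left.1 (disjoint_frontier_iff_isOpen.2 hΩ) hx (hd hlt)
      rw [hf0, ← dist_eq_norm]
      linarith [(hclose x hx).1.2, dist_triangle_left x z₀ (h x), dist_comm z₀ (h x)]
  intro z hz
  refine subset_of_isPreconnected_of_disjoint_frontier ((convex_ball (0 : ℂ) r).isPreconnected.image
    f (hf.differentiableOn.continuousOn.mono (ball_subset_ball hr.le))) (disjoint_left.2 ?_)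
    ⟨z₀, ⟨0, mem_ball_self (pos_of_mem_ball hz), hf0⟩, hz₀⟩ (mem_image_of_mem f hz)
  rintro _ ⟨w, hw, rfl⟩ hx
  have := hfar _ hx w hw
  rw [← dist_eq_norm, dist_comm] at this
  exact this.not_gt (hclose _ hx).2

namespace IsNormalizedRiemannMap

variable {φ f : ℂ → ℂ} {Ω W : Set ℂ} {z₀ : ℂ} {r : ℝ}

theorem mem (hf : IsNormalizedRiemannMap f W z₀) : z₀ ∈ W :=
  hf.map_zero ▸ hf.mapsTo zero_mem_unitBall

theorem exists_transition (hφ : IsNormalizedRiemannMap φ Ω z₀)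
    (hf : IsNormalizedRiemannMap f W z₀) (hr0 : 0 < r) (hr1 : r ≤ 1)
    (hmaps : MapsTo f (ball 0 r) Ω) :
    ∃ k : ℂ → ℂ, DifferentiableOn ℂ k (ball 0 r) ∧ MapsTo k (ball 0 r) (ball 0 1) ∧
      EqOn (φ ∘ k) f (ball 0 r) ∧ k 0 = 0 ∧ deriv φ 0 * deriv k 0 = deriv f 0 := by
  rw [← hφ.image_eq] at hmaps
  set k := Function.invFunOn φ (ball 0 1) ∘ f
  have h0 : (0 : ℂ) ∈ ball (0 : ℂ) r := mem_ball_self hr0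
  have hk : DifferentiableOn ℂ k (ball 0 r) :=
    (differentiableOn_invFunOn_image isOpen_ball hφ.differentiableOn hφ.injOn).comp
      (hf.differentiableOn.mono (ball_subset_ball hr1)) hmaps
  have hk1 : MapsTo k (ball 0 r) (ball 0 1) := fun z hz => Function.invFunOn_mem (hmaps hz)
  have hφk : EqOn (φ ∘ k) f (ball 0 r) := fun z hz => Function.invFunOn_eq (hmaps hz)
  have hk0 : k 0 = 0 := hφ.injOn (hk1 h0) zero_mem_unitBall
    ((hφk h0).trans (hf.map_zero.trans hφ.map_zero.symm))
  refine ⟨k, hk, hk1, hφk, hk0, ?_⟩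
  have hφd : DifferentiableAt ℂ φ (k 0) :=
    hφ.differentiableOn.differentiableAt (isOpen_ball.mem_nhds (hk1 h0))
  rw [← (hφk.eventuallyEq_of_mem (isOpen_ball.mem_nhds h0)).deriv_eq,
    deriv_comp 0 hφd (hk.differentiableAt (isOpen_ball.mem_nhds h0)), hk0]

theorem exists_map_eq_norm_sub_le (hφ : IsNormalizedRiemannMap φ Ω z₀)
    (hf : IsNormalizedRiemannMap f W z₀) (hr1 : r < 1) (hfΩ : MapsTo f (ball 0 r) Ω)
    (hφW : MapsTo φ (ball 0 r) W) {z : ℂ} (hz : z ∈ ball 0 r) :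
    ∃ w ∈ ball (0 : ℂ) 1, φ w = f z ∧
      ‖w - z‖ ≤ 2 * (1 / r - r) / (r - ‖z‖) + (1 / r - r) := by
  have hr0 : 0 < r := pos_of_mem_ball hz
  obtain ⟨k, hk, hk1, hφk, hk0, hkd⟩ := hφ.exists_transition hf hr0 hr1.le hfΩ
  obtain ⟨g, hg, hg1, -, hg0, hgd⟩ := hf.exists_transition hφ hr0 hr1.le hφW
  obtain ⟨a, ha0, ha⟩ := hφ.deriv_zero
  obtain ⟨b, hb0, hb⟩ := hf.deriv_zero
  have ha0' : (a : ℂ) ≠ 0 := Complex.ofReal_ne_zero.2 ha0.ne'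
  have hb0' : (b : ℂ) ≠ 0 := Complex.ofReal_ne_zero.2 hb0.ne'
  rw [ha, hb] at hkd hgd
  have hkd' : deriv k 0 = ((b / a : ℝ) : ℂ) := by
    rw [Complex.ofReal_div, eq_div_iff ha0', mul_comm, hkd]
  have hgd' : deriv g 0 = ((a / b : ℝ) : ℂ) := by
    rw [Complex.ofReal_div, eq_div_iff hb0', mul_comm, hgd]
  have hab : a / b ≤ 1 / r := by
    have := Complex.norm_deriv_le_div_of_mapsTo_ball hg
      (by simpa only [hg0] using hg1.mono_right ball_subset_closedBall) hr0
    rwa [hgd', Complex.norm_real, Real.norm_of_nonneg (by positivity)] at this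
  have hrab : r ≤ b / a := by
    rw [div_le_div_iff₀ hb0 hr0] at hab
    rw [le_div_iff₀ ha0]
    linarith
  exact ⟨k z, hk1 hz, hφk hz, norm_sub_self_le_of_le_deriv_zero hr1 hk hk1 hk0 hkd' hrab hz⟩

end IsNormalizedRiemannMap

theorem exists_radius_transition_bound_lt {ρ η : ℝ} (hρ : ρ < 1) (hη : 0 < η) :
    ∃ r, 0 < r ∧ r < 1 ∧ ρ < r ∧ 2 * (1 / r - r) / (r - ρ) + (1 / r - r) < η := by
  have hcont : ContinuousAt (fun r : ℝ => 2 * (1 / r - r) / (r - ρ) + (1 / r - r)) 1 := by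
    have : (1 : ℝ) - ρ ≠ 0 := by linarith
    fun_prop (disch := first | simp | assumption)
  have hsmall := hcont.tendsto.eventually_lt_const (u := η) (by simpa using hη)
  have hnear : ∀ᶠ r in 𝓝[<] (1 : ℝ),
      (0 < r ∧ ρ < r) ∧ 2 * (1 / r - r) / (r - ρ) + (1 / r - r) < η :=
    nhdsWithin_le_nhds (((lt_mem_nhds one_pos).and (lt_mem_nhds hρ)).and hsmall)
  obtain ⟨r, ⟨⟨h0, hρr⟩, hr⟩, h1⟩ := (hnear.and self_mem_nhdsWithin).exists
  exact ⟨r, h0, h1, hρr, hr⟩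

theorem IsNormalizedRiemannMap.exists_pos_norm_sub_lt_of_norm_le {φ : ℂ → ℂ} {Ω : Set ℂ} {z₀ : ℂ}
    (hφ : IsNormalizedRiemannMap φ Ω z₀) {ρ η : ℝ} (hρ : ρ < 1) (hη : 0 < η) :
    ∃ δ > 0, ∀ h f : ℂ → ℂ, ContinuousOn h (frontier Ω) → (∀ x ∈ frontier Ω, dist (h x) x < δ) →
      IsNormalizedRiemannMap f (connectedComponentIn (h '' frontier Ω)ᶜ z₀) z₀ →
      ∀ z : ℂ, ‖z‖ ≤ ρ → ‖f z - φ z‖ < η := by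
  obtain ⟨η', hη'0, hη'⟩ := Metric.uniformContinuousOn_iff.1 hφ.uniformContinuousOn η hη
  obtain ⟨r, hr0, hr1, hρr, hr⟩ := exists_radius_transition_bound_lt hρ hη'0
  obtain ⟨δ₁, hδ₁, hφW⟩ := hφ.exists_pos_mapsTo_connectedComponentIn_compl_image hr1
  obtain ⟨δ₂, hδ₂, hfΩ⟩ :=
    exists_pos_mapsTo_of_isRiemannMap_displaced hφ.isOpen hφ.isBounded hφ.mem hr1
  refine ⟨min δ₁ δ₂, lt_min hδ₁ hδ₂, fun h f hh hclose hf z hz => ?_⟩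
  simp only [lt_min_iff] at hclose
  have hzr : z ∈ ball (0 : ℂ) r := mem_ball_zero_iff.2 (hz.trans_lt hρr)
  obtain ⟨w, hw, hφw, hwz⟩ := hφ.exists_map_eq_norm_sub_le hf hr1
    (hfΩ h f hh (fun x hx => (hclose x hx).2) hf.toIsRiemannMap hf.map_zero)
    (hφ.map_zero ▸ hφW h fun x hx => (hclose x hx).1) hzr
  rw [← hφw, ← dist_eq_norm]
  refine hη' w (subset_closure hw) z (subset_closure (ball_subset_ball hr1.le hzr)) ?_
  rw [dist_eq_norm]
  have : 0 < 1 / r - r := by linarith [one_lt_one_div hr0 hr1]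
  have : 0 < r - ρ := by linarith
  refine (hwz.trans ?_).trans_lt hr
  gcongr

section ContinuousLogarithm

variable {X Y : Type*} [TopologicalSpace X] [TopologicalSpace Y]

/-- A function `q` has a continuous logarithm on `S` if `q = exp ∘ L` on `S` for some `L`
continuous on `S`. Its failure plays the role of a nonzero winding number. -/
def HasContinuousLogOn (q : X → ℂ) (S : Set X) : Prop :=
  ∃ L : X → ℂ, ContinuousOn L S ∧ ∀ s ∈ S, Complex.exp (L s) = q s

namespace HasContinuousLogOn

variable {p q : X → ℂ} {S : Set X}

theorem congr (hq : HasContinuousLogOn q S) (h : EqOn p q S) : HasContinuousLogOn p S := by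
  obtain ⟨L, hL, hexp⟩ := hq
  exact ⟨L, hL, fun s hs => (hexp s hs).trans (h hs).symm⟩

theorem mono {T : Set X} (hq : HasContinuousLogOn q S) (h : T ⊆ S) : HasContinuousLogOn q T := by
  obtain ⟨L, hL, hexp⟩ := hq
  exact ⟨L, hL.mono h, fun s hs => hexp s (h hs)⟩

theorem comp {q : Y → ℂ} {T : Set Y} {F : X → Y} (hq : HasContinuousLogOn q T)
    (hF : ContinuousOn F S) (hmaps : MapsTo F S T) :
    HasContinuousLogOn (fun s => q (F s)) S := by
  obtain ⟨L, hL, hexp⟩ := hq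
  exact ⟨fun s => L (F s), hL.comp hF hmaps, fun s hs => hexp _ (hmaps hs)⟩

theorem mul (hp : HasContinuousLogOn p S) (hq : HasContinuousLogOn q S) :
    HasContinuousLogOn (fun s => p s * q s) S := by
  obtain ⟨L, hL, hexp⟩ := hp
  obtain ⟨L', hL', hexp'⟩ := hq
  exact ⟨fun s => L s + L' s, hL.add hL', fun s hs => by
    rw [Complex.exp_add, hexp s hs, hexp' s hs]⟩

theorem inv (hp : HasContinuousLogOn p S) : HasContinuousLogOn (fun s => (p s)⁻¹) S := by
  obtain ⟨L, hL, hexp⟩ := hp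
  exact ⟨fun s => -L s, hL.neg, fun s hs => by rw [Complex.exp_neg, hexp s hs]⟩

theorem div (hp : HasContinuousLogOn p S) (hq : HasContinuousLogOn q S) :
    HasContinuousLogOn (fun s => p s / q s) S := by
  simpa only [div_eq_mul_inv] using hp.mul hq.inv

theorem of_mapsTo_slitPlane (hp : ContinuousOn p S) (h : MapsTo p S Complex.slitPlane) :
    HasContinuousLogOn p S :=
  ⟨fun s => Complex.log (p s), hp.clog h, fun _ hs =>
    Complex.exp_log (Complex.slitPlane_ne_zero (h hs))⟩

theorem of_convex {E : Type*} [AddCommGroup E] [Module ℝ E] [TopologicalSpace E]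
    [IsTopologicalAddGroup E] [ContinuousSMul ℝ E] [LocallyConvexSpace ℝ E] {R : Set E} {u : E → ℂ}
    (hR : Convex ℝ R) (hu : ContinuousOn u R) (h0 : ∀ s ∈ R, u s ≠ 0) :
    HasContinuousLogOn u R := by
  classical
  rcases R.eq_empty_or_nonempty with rfl | hne
  · exact ⟨0, continuousOn_empty _, by simp⟩
  have := hR.locallyPathConnectedSpace
  have := hR.contractibleSpace hne
  have hsimply : IsSimplyConnected (univ : Set R) :=
    have := (Homeomorph.Set.univ R).contractibleSpace
    SimplyConnectedSpace.ofContractible _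
  obtain ⟨L, hL, hexp⟩ := Complex.exists_continuousOn_eqOn_exp_comp hsimply isOpen_univ
    (continuousOn_univ.2 hu.domRestrict) (by simpa using h0)
  have hL' : Set.domRestrict R (fun s => if hs : s ∈ R then L ⟨s, hs⟩ else 0) = L :=
    funext fun s => dif_pos s.2
  refine ⟨_, continuousOn_iff_continuous_domRestrict.2 (hL' ▸ continuousOn_univ.1 hL),
    fun s hs => ?_⟩
  simpa [hs] using hexp (mem_univ ⟨s, hs⟩)

theorem sub_const_of_notMem_convex {E : Set ℂ} (hE : Convex ℝ E) {w : ℂ} (hw : w ∉ E) :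
    HasContinuousLogOn (fun ξ => ξ - w) E :=
  of_convex hE (by fun_prop) fun _ hs h => hw (sub_eq_zero.1 h ▸ hs)

theorem sub_div_sub_of_mem_connectedComponentIn {K : Set ℂ} (hK : IsClosed K) {z w : ℂ}
    (hw : w ∈ connectedComponentIn Kᶜ z) :
    HasContinuousLogOn (fun ξ => (ξ - w) / (ξ - z)) K := by
  have hz : z ∈ Kᶜ := by
    by_contra h
    simp [connectedComponentIn_eq_empty h] at hw
  have hsub : connectedComponentIn Kᶜ z ⊆ Kᶜ := connectedComponentIn_subset _ _
  have hne : ∀ x ∈ connectedComponentIn Kᶜ z, ∀ ξ ∈ K, ξ - x ≠ 0 := fun x hx ξ hξ h =>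
    hsub hx (sub_eq_zero.1 h ▸ hξ)
  refine isPreconnected_connectedComponentIn.induction₂
    (fun x y => HasContinuousLogOn (fun ξ => (ξ - y) / (ξ - x)) K) (fun x hx => ?_)
    (fun x y z _ hy _ hxy hyz => (hyz.mul hxy).congr fun ξ hξ =>
      (div_mul_div_cancel₀ (hne y hy ξ hξ)).symm)
    (fun x y _ _ hxy => by simpa only [inv_div] using hxy.inv) (mem_connectedComponentIn hz) hw
  obtain ⟨r, hr, hball⟩ := Metric.isOpen_iff.1 hK.isOpen_compl x (hsub hx)
  filter_upwards [nhdsWithin_le_nhds (ball_mem_nhds x hr)] with y hy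
  refine of_mapsTo_slitPlane (by fun_prop (disch := exact hne x hx)) fun ξ hξ => ?_
  have hrξ : r ≤ ‖ξ - x‖ := by
    rw [← dist_eq_norm]
    exact not_lt.1 fun h => hball h hξ
  have hnorm : ‖(x - y) / (ξ - x)‖ < 1 := by
    rw [norm_div, div_lt_one (hr.trans_le hrξ), norm_sub_rev, ← dist_eq_norm]
    exact (mem_ball.1 hy).trans_le hrξ
  have hsum : 1 + (x - y) / (ξ - x) = (ξ - y) / (ξ - x) := by
    rw [one_add_div (hne x hx ξ hξ), sub_add_sub_cancel]
  exact hsum ▸ Complex.mem_slitPlane_of_norm_lt_one hnorm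

end HasContinuousLogOn

theorem sub_eq_sub_of_exp_eqOn {L L' : X → ℂ} {B : Set X} (hB : IsPreconnected B)
    (hL : ContinuousOn L B) (hL' : ContinuousOn L' B)
    (hexp : ∀ x ∈ B, Complex.exp (L x) = Complex.exp (L' x)) {x y : X} (hx : x ∈ B) (hy : y ∈ B) :
    L x - L' x = L y - L' y := by
  have hone : ∀ x ∈ B, Complex.exp (L x - L' x) = 1 := fun x hx => by
    rw [Complex.exp_sub, hexp x hx, div_self (Complex.exp_ne_zero _)]
  exact Complex.isCoveringMap_exp.constOn_of_comp hB (hL.sub hL')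
    (fun a ha b hb => Subtype.ext ((hone a ha).trans (hone b hb).symm)) hx hy

/- On the connected set `B` the two logarithms of `q` differ by a constant, so one of them can be
shifted to agree with the other. -/
theorem HasContinuousLogOn.comp_union {q : Y → ℂ} {F : X → Y} {A C : Set X} {K E B : Set Y}
    (hqK : HasContinuousLogOn q K) (hqE : HasContinuousLogOn q E) (hB : IsPreconnected B)
    (hBK : B ⊆ K) (hBE : B ⊆ E) (hA : IsClosed A) (hC : IsClosed C) (hFA : ContinuousOn F A)
    (hFC : ContinuousOn F C) (hAK : MapsTo F A K) (hCE : MapsTo F C E)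
    (hACB : MapsTo F (A ∩ C) B) : HasContinuousLogOn (fun s => q (F s)) (A ∪ C) := by
  classical
  obtain ⟨L, hL, hexp⟩ := hqK
  obtain ⟨L', hL', hexp'⟩ := hqE
  obtain ⟨κ, hκ, hκexp⟩ : ∃ κ : ℂ, (∀ ξ ∈ B, L ξ = L' ξ + κ) ∧ Complex.exp κ = 1 := by
    rcases B.eq_empty_or_nonempty with rfl | ⟨b, hb⟩
    · exact ⟨0, by simp, by simp⟩
    have hEq : ∀ ξ ∈ B, Complex.exp (L ξ) = Complex.exp (L' ξ) := fun ξ hξ =>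
      (hexp ξ (hBK hξ)).trans (hexp' ξ (hBE hξ)).symm
    refine ⟨L b - L' b, fun ξ hξ => ?_, ?_⟩
    · rw [← sub_eq_iff_eq_add', sub_eq_sub_of_exp_eqOn hB (hL.mono hBK) (hL'.mono hBE) hEq hξ hb]
    · rw [Complex.exp_sub, hEq b hb, div_self (Complex.exp_ne_zero _)]
  set G : X → ℂ := fun s => if s ∈ A then L (F s) else L' (F s) + κ
  have hGA : EqOn G (fun s => L (F s)) A := fun s hs => if_pos hs
  have hGC : EqOn G (fun s => L' (F s) + κ) C := fun s hs => by
    by_cases hsA : s ∈ A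
    · rw [hGA hsA]
      exact hκ _ (hACB ⟨hsA, hs⟩)
    · exact if_neg hsA
  refine ⟨G, ContinuousOn.union_of_isClosed ((hL.comp hFA hAK).congr hGA)
    (((hL'.comp hFC hCE).add continuousOn_const).congr hGC) hA hC, ?_⟩
  rintro s (hs | hs)
  · rw [hGA hs, hexp _ (hAK hs)]
  · rw [hGC hs, Complex.exp_add, hκexp, mul_one, hexp' _ (hCE hs)]

theorem not_hasContinuousLogOn_id_sphere : ¬ HasContinuousLogOn (id : ℂ → ℂ) (sphere 0 1) := by
  rintro ⟨L, hL, hexp⟩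
  have hmem : ∀ θ : ℝ, Complex.exp (θ * Complex.I) ∈ sphere (0 : ℂ) 1 := fun θ => by
    simp [Complex.norm_exp_ofReal_mul_I]
  have hperiod := sub_eq_sub_of_exp_eqOn (L := fun θ : ℝ => L (Complex.exp (θ * Complex.I)))
    (L' := fun θ : ℝ => θ * Complex.I) isPreconnected_univ
    (hL.comp (by fun_prop) fun θ _ => hmem θ) (by fun_prop) (fun θ _ => hexp _ (hmem θ))
    (mem_univ 0) (mem_univ (2 * Real.pi))
  have hzero : 2 * (Real.pi : ℂ) * Complex.I = 0 := by
    refine sub_right_injective (b := L 1) ?_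
    simpa [Complex.exp_two_pi_mul_I] using hperiod.symm
  exact Complex.two_pi_I_ne_zero hzero

theorem inv_gauge_smul_mem_frontier {E : Type*} [AddCommGroup E] [Module ℝ E] [TopologicalSpace E]
    [T1Space E] [IsTopologicalAddGroup E] [ContinuousSMul ℝ E] {R : Set E} (hR : Convex ℝ R)
    (h0 : R ∈ 𝓝 0) (hb : Bornology.IsVonNBounded ℝ R) {x : E} (hx : x ≠ 0) :
    (gauge R x)⁻¹ • x ∈ frontier R := by
  have hpos := (gauge_pos (absorbent_nhds_zero h0) hb).2 hx
  rw [← gauge_eq_one_iff_mem_frontier hR h0, gauge_smul_of_nonneg (inv_nonneg.2 hpos.le)]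
  exact inv_mul_cancel₀ hpos.ne'

/- Radial projection carries the unit circle to the frontier of a convex body. -/
theorem not_hasContinuousLogOn_id_frontier {R : Set ℂ} (hR : Convex ℝ R)
    (hb : Bornology.IsBounded R) (h0 : R ∈ 𝓝 0) :
    ¬ HasContinuousLogOn (id : ℂ → ℂ) (frontier R) := by
  intro hlog
  have hvb : Bornology.IsVonNBounded ℝ R := NormedSpace.isVonNBounded_of_isBounded ℝ hb
  have hne : ∀ s ∈ sphere (0 : ℂ) 1, s ≠ 0 := fun s hs => ne_zero_of_mem_unit_sphere ⟨s, hs⟩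
  have hpos : ∀ s ∈ sphere (0 : ℂ) 1, 0 < gauge R s := fun s hs =>
    (gauge_pos (absorbent_nhds_zero h0) hvb).2 (hne s hs)
  have hgauge : Continuous (gauge R) := continuous_gauge hR h0
  have hradial : HasContinuousLogOn (fun s => (gauge R s)⁻¹ • s) (sphere 0 1) :=
    hlog.comp ((hgauge.continuousOn.inv₀ fun s hs => (hpos s hs).ne').smul continuousOn_id)
      fun s hs => inv_gauge_smul_mem_frontier hR h0 hvb (hne s hs)
  have hscale : HasContinuousLogOn (fun s => (gauge R s : ℂ)) (sphere 0 1) :=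
    .of_mapsTo_slitPlane (by fun_prop) fun s hs => Complex.ofReal_mem_slitPlane.2 (hpos s hs)
  refine not_hasContinuousLogOn_id_sphere ((hradial.mul hscale).congr fun s hs => ?_)
  have hg : (gauge R s : ℂ) ≠ 0 := Complex.ofReal_ne_zero.2 (hpos s hs).ne'
  simp only [id_eq]
  rw [Complex.real_smul, Complex.ofReal_inv, mul_right_comm, inv_mul_cancel₀ hg, one_mul]

theorem not_hasContinuousLogOn_sub_const_frontier {R : Set ℂ} (hR : Convex ℝ R)
    (hb : Bornology.IsBounded R) {a : ℂ} (ha : a ∈ interior R) :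
    ¬ HasContinuousLogOn (fun s => s - a) (frontier R) := by
  intro hlog
  have hpre : (fun s => s + a) ⁻¹' R ∈ 𝓝 0 :=
    (continuous_add_const a).continuousAt.preimage_mem_nhds
      (by simpa using mem_interior_iff_mem_nhds.1 ha)
  have hbdd : Bornology.IsBounded ((fun s => s + a) ⁻¹' R) :=
    (isometry_add_right a).antilipschitz.isBounded_preimage hb
  refine not_hasContinuousLogOn_id_frontier (hR.translate_preimage_left a) hbdd hpre ?_
  rw [← Homeomorph.coe_addRight, ← Homeomorph.preimage_frontier]
  refine (hlog.comp (F := (· + a)) (by fun_prop) fun s hs => hs).congr fun s _ => ?_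
  exact (add_sub_cancel_right s a).symm

/- The quotient `(F s - F a) / (s - a)` extends to a function without zeros on the convex body. -/
theorem not_hasContinuousLogOn_comp_sub_const_frontier {R : Set ℂ} (hR : Convex ℝ R)
    (hRc : IsCompact R) {F : ℂ → ℂ} {a : ℂ} (ha : a ∈ interior R) (hF : ContinuousOn F R)
    (hFd : DifferentiableOn ℂ F (interior R)) (hinj : InjOn F (interior R))
    (hne : ∀ s ∈ frontier R, F s ≠ F a) :
    ¬ HasContinuousLogOn (fun s => F s - F a) (frontier R) := by
  intro hlog
  have hnhds : interior R ∈ 𝓝 a := isOpen_interior.mem_nhds ha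
  have hslope : ContinuousOn (dslope F a) R :=
    (continuousOn_dslope (mem_of_superset hnhds interior_subset)).2
      ⟨hF, hFd.differentiableAt hnhds⟩
  have hslope0 : ∀ s ∈ R, dslope F a s ≠ 0 := fun s hs => by
    rcases eq_or_ne s a with rfl | hsa
    · rw [dslope_same]
      exact deriv_ne_zero_of_injOn isOpen_interior hFd hinj ha
    · rw [dslope_of_ne _ hsa, slope_def_field]
      refine div_ne_zero (sub_ne_zero.2 fun h => ?_) (sub_ne_zero.2 hsa)
      by_cases hsi : s ∈ interior R
      · exact hsa (hinj hsi ha h)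
      · exact hne s ⟨subset_closure hs, hsi⟩ h
  have hfr : frontier R ⊆ R := hRc.isClosed.frontier_subset
  refine not_hasContinuousLogOn_sub_const_frontier hR hRc.isBounded ha
    ((hlog.div ((HasContinuousLogOn.of_convex hR hslope hslope0).mono hfr)).congr fun s hs => ?_)
  rw [eq_div_iff (hslope0 s (hfr hs)), ← sub_smul_dslope, smul_eq_mul]

/- If `F a` were not in `E`, the function `(F s - F a) / (F s - z)` would have a continuous
logarithm on `A`, as `F a` and `z` lie in the same component of the complement of `K`, and also on
`C`, as both points lie outside the convex set `E`. -/
theorem mem_of_frontier_subset_union {R A C B K E : Set ℂ} {F : ℂ → ℂ} {a z : ℂ}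
    (hR : Convex ℝ R) (hRc : IsCompact R) (hF : ContinuousOn F R)
    (hFd : DifferentiableOn ℂ F (interior R)) (hinj : InjOn F (interior R)) (ha : a ∈ interior R)
    (hA : IsClosed A) (hC : IsClosed C) (hAR : A ⊆ R) (hCR : C ⊆ R) (hcover : frontier R ⊆ A ∪ C)
    (hK : IsClosed K) (hE : Convex ℝ E) (hAK : MapsTo F A K) (hCE : MapsTo F C E)
    (hB : IsPreconnected B) (hBK : B ⊆ K) (hBE : B ⊆ E) (hACB : MapsTo F (A ∩ C) B)
    (hzE : z ∉ E) (hz : ∀ s ∈ R, F s ≠ z) (haK : F a ∈ connectedComponentIn Kᶜ z) : F a ∈ E := by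
  by_contra haE
  have hquot : HasContinuousLogOn (fun s => (F s - F a) / (F s - z)) (A ∪ C) :=
    (HasContinuousLogOn.sub_div_sub_of_mem_connectedComponentIn hK haK).comp_union
      ((HasContinuousLogOn.sub_const_of_notMem_convex hE haE).div
        (.sub_const_of_notMem_convex hE hzE))
      hB hBK hBE hA hC (hF.mono hAR) (hF.mono hCR) hAK hCE hACB
  have hden : HasContinuousLogOn (fun s => F s - z) R :=
    .of_convex hR (hF.sub continuousOn_const) fun s hs => sub_ne_zero.2 (hz s hs)
  have hfr : frontier R ⊆ R := hRc.isClosed.frontier_subset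
  refine not_hasContinuousLogOn_comp_sub_const_frontier hR hRc ha hF hFd hinj (fun s hs h => ?_)
    (((hquot.mono hcover).mul (hden.mono hfr)).congr fun s hs =>
      (div_mul_cancel₀ _ (sub_ne_zero.2 (hz s (hfr hs)))).symm)
  rcases hcover hs with hsA | hsC
  · exact connectedComponentIn_subset _ _ haK (h ▸ hAK hsA)
  · exact haE (h ▸ hCE hsC)

end ContinuousLogarithm

section LengthArea

open MeasureTheory

variable {F : ℂ → ℂ}

theorem lintegral_sq_le_measure_univ_mul {α : Type*} [MeasurableSpace α] {μ : Measure α}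
    {f : α → ENNReal} (hf : AEMeasurable f μ) :
    (∫⁻ x, f x ∂μ) ^ 2 ≤ μ univ * ∫⁻ x, f x ^ 2 ∂μ := by
  have hholder := ENNReal.lintegral_mul_le_Lp_mul_Lq μ Real.HolderConjugate.two_two hf
    (aemeasurable_const (b := 1))
  simp only [Pi.mul_apply, mul_one, ENNReal.rpow_ofNat, one_pow, lintegral_const, one_mul]
    at hholder
  refine (pow_le_pow_left' hholder 2).trans_eq ?_
  rw [mul_pow, ← ENNReal.rpow_mul_natCast, ← ENNReal.rpow_mul_natCast]
  norm_num [mul_comm]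

theorem enorm_sub_sq_le_mul_lintegral {E : Type*} [NormedAddCommGroup E] [NormedSpace ℝ E]
    [CompleteSpace E] {g g' : ℝ → E} {a b : ℝ} (hab : a < b) (hg : ContinuousOn g (Icc a b))
    (hderiv : ∀ t ∈ Ioo a b, HasDerivAt g (g' t) t)
    (hmeas : AEStronglyMeasurable g' (volume.restrict (Ioo a b))) :
    ‖g b - g a‖ₑ ^ 2 ≤ ENNReal.ofReal (b - a) * ∫⁻ t in Ioo a b, ‖g' t‖ₑ ^ 2 := by
  have hcs := lintegral_sq_le_measure_univ_mul hmeas.enorm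
  rw [Measure.restrict_apply_univ, Real.volume_Ioo] at hcs
  rcases eq_or_ne (∫⁻ t in Ioo a b, ‖g' t‖ₑ ^ 2) ⊤ with htop | hfin
  · simp [htop, hab]
  have hint : IntegrableOn g' (Ioo a b) := ⟨hmeas,
    (ENNReal.pow_lt_top_iff.1 (hcs.trans_lt (ENNReal.mul_lt_top ENNReal.ofReal_lt_top
      hfin.lt_top))).resolve_right two_ne_zero⟩
  rw [← intervalIntegral.integral_eq_sub_of_hasDerivAt_of_le hab.le hg hderiv
    ((intervalIntegrable_iff_integrableOn_Ioo_of_le hab.le).2 hint),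
    intervalIntegral.integral_of_le hab.le, integral_Ioc_eq_integral_Ioo]
  exact (pow_le_pow_left' (enorm_integral_le_lintegral_enorm g') 2).trans hcs

theorem lintegral_enorm_deriv_sq_eq_volume_image {Q : Set ℂ} (hQ : IsOpen Q)
    (hF : DifferentiableOn ℂ F Q) (hinj : InjOn F Q) :
    ∫⁻ s in Q, ‖deriv F s‖ₑ ^ 2 = volume (F '' Q) := by
  have hdet : ∀ a : ℂ, ENNReal.ofReal |(a • (1 : ℂ →L[ℝ] ℂ)).det| = ‖a‖ₑ ^ 2 := fun a => by
    have hmul : ((a • (1 : ℂ →L[ℝ] ℂ) : ℂ →L[ℝ] ℂ) : ℂ →ₗ[ℝ] ℂ) = Algebra.lmul ℝ ℂ a := by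
      ext; simp
    rw [ContinuousLinearMap.det, hmul, ← Algebra.norm_apply, Algebra.norm_complex_apply,
      Complex.normSq_eq_norm_sq, abs_of_nonneg (sq_nonneg _),
      ENNReal.ofReal_pow (norm_nonneg _), ofReal_norm]
  rw [← lintegral_abs_det_fderiv_eq_addHaar_image volume hQ.measurableSet
    (f' := fun s => deriv F s • (1 : ℂ →L[ℝ] ℂ)) (fun s hs => ?_) hinj]
  · simp only [hdet]
  · exact (hF.differentiableAt (hQ.mem_nhds hs)).hasDerivAt.complexToReal_fderiv.hasFDerivWithinAt

theorem setLIntegral_reProdIm {g : ℂ → ENNReal} (hg : Measurable g) {S T : Set ℝ}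
    (hS : MeasurableSet S) (hT : MeasurableSet T) :
    ∫⁻ s in S ×ℂ T, g s = ∫⁻ θ in T, ∫⁻ x in S, g ⟨x, θ⟩ := by
  have hg' : Measurable fun p : ℝ × ℝ => g ⟨p.1, p.2⟩ :=
    hg.comp Complex.measurableEquivRealProd.symm.measurable
  calc ∫⁻ s in S ×ℂ T, g s = ∫⁻ p in S ×ˢ T, g ⟨p.1, p.2⟩ :=
        Complex.volume_preserving_equiv_real_prod.setLIntegral_comp_preimage (hS.prod hT) hg'
    _ = ∫⁻ θ in T, ∫⁻ x in S, g ⟨x, θ⟩ := by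
        rw [Measure.volume_eq_prod, ← Measure.prod_restrict]
        exact lintegral_prod_symm _ hg'.aemeasurable

theorem exists_lintegral_enorm_deriv_sq_le {x₀ x₁ α β : ℝ} (hαβ : α < β)
    (hF : DifferentiableOn ℂ F (Ioo x₀ x₁ ×ℂ Ioo α β)) (hinj : InjOn F (Ioo x₀ x₁ ×ℂ Ioo α β)) :
    ∃ θ ∈ Ioo α β, ∫⁻ x in Ioo x₀ x₁, ‖deriv F ⟨x, θ⟩‖ₑ ^ 2 ≤
      volume (F '' (Ioo x₀ x₁ ×ℂ Ioo α β)) / ENNReal.ofReal (β - α) := by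
  have hmeas : Measurable fun s => ‖deriv F s‖ₑ ^ 2 := (measurable_deriv F).enorm.pow_const 2
  have hmeas' : Measurable fun θ => ∫⁻ x in Ioo x₀ x₁, ‖deriv F ⟨x, θ⟩‖ₑ ^ 2 :=
    (hmeas.comp Complex.measurableEquivRealProd.symm.measurable).lintegral_prod_left'
  obtain ⟨θ, hθ, hle⟩ := exists_le_setLAverage (μ := volume) (s := Ioo α β)
    (by simpa using hαβ) (by simp) hmeas'.aemeasurable
  refine ⟨θ, hθ, hle.trans_eq ?_⟩
  rw [setLAverage_eq, Real.volume_Ioo, ← setLIntegral_reProdIm hmeas measurableSet_Ioo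
    measurableSet_Ioo, lintegral_enorm_deriv_sq_eq_volume_image
    (isOpen_Ioo.reProdIm isOpen_Ioo) hF hinj]

theorem enorm_sub_sq_le_of_lintegral_enorm_deriv_sq_le {Q : Set ℂ} {θ x₀ x₁ x y : ℝ} {J : ENNReal}
    (hQ : IsOpen Q) (hF : DifferentiableOn ℂ F Q) (hxQ : ∀ t ∈ Ioo x₀ x₁, (⟨t, θ⟩ : ℂ) ∈ Q)
    (hcont : ContinuousOn (fun t : ℝ => F ⟨t, θ⟩) (Icc x₀ x₁))
    (hJ : ∫⁻ t in Ioo x₀ x₁, ‖deriv F ⟨t, θ⟩‖ₑ ^ 2 ≤ J) (hx : x ∈ Icc x₀ x₁) (hy : y ∈ Icc x₀ x₁) :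
    ‖F ⟨y, θ⟩ - F ⟨x, θ⟩‖ₑ ^ 2 ≤ ENNReal.ofReal (x₁ - x₀) * J := by
  wlog hxy : x < y generalizing x y
  · rcases (not_lt.1 hxy).eq_or_lt with rfl | hlt
    · simp
    · rw [enorm_sub_rev]
      exact this hy hx hlt
  have hsub : Ioo x y ⊆ Ioo x₀ x₁ := Ioo_subset_Ioo hx.1 hy.2
  have hderiv : ∀ t ∈ Ioo x y, HasDerivAt (fun t : ℝ => F ⟨t, θ⟩) (deriv F ⟨t, θ⟩) t := by
    intro t ht
    have hFt := (hF.differentiableAt (hQ.mem_nhds (hxQ t (hsub ht)))).hasDerivAt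
    simp only [Complex.mk_eq_add_mul_I] at hFt ⊢
    exact (hFt.comp_add_const (t : ℂ) (θ * Complex.I)).comp_ofReal
  have hmeas : Measurable fun t : ℝ => deriv F ⟨t, θ⟩ := (measurable_deriv F).comp
    (Complex.measurableEquivRealProd.symm.measurable.comp measurable_prodMk_right)
  refine (enorm_sub_sq_le_mul_lintegral hxy (hcont.mono (Icc_subset_Icc hx.1 hy.2)) hderiv
    hmeas.aestronglyMeasurable).trans ?_
  gcongr
  · exact hy.2
  · exact hx.1
  · exact (lintegral_mono_set hsub).trans hJ

theorem exists_norm_sub_le_of_injOn_reProdIm {x₀ x₁ α β M ε : ℝ} (hαβ : α < β)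
    (hε : 0 ≤ ε) (hF : DifferentiableOn ℂ F (Ioo x₀ x₁ ×ℂ Ioo α β))
    (hinj : InjOn F (Ioo x₀ x₁ ×ℂ Ioo α β)) (hcont : ContinuousOn F (Icc x₀ x₁ ×ℂ Ioo α β))
    (hM : MapsTo F (Ioo x₀ x₁ ×ℂ Ioo α β) (closedBall 0 M))
    (hthin : Real.pi * M ^ 2 * (x₁ - x₀) ≤ ε ^ 2 * (β - α)) :
    ∃ θ ∈ Ioo α β, ∀ x ∈ Icc x₀ x₁, ∀ y ∈ Icc x₀ x₁, ‖F ⟨y, θ⟩ - F ⟨x, θ⟩‖ ≤ ε := by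
  obtain ⟨θ, hθ, hJ⟩ := exists_lintegral_enorm_deriv_sq_le hαβ hF hinj
  have hmk : Continuous fun t : ℝ => (⟨t, θ⟩ : ℂ) := by
    simp only [Complex.mk_eq_add_mul_I]
    fun_prop
  refine ⟨θ, hθ, fun x hx y hy => ?_⟩
  have hosc := enorm_sub_sq_le_of_lintegral_enorm_deriv_sq_le (isOpen_Ioo.reProdIm isOpen_Ioo) hF
    (fun t ht => ⟨ht, hθ⟩) (hcont.comp hmk.continuousOn fun t ht => ⟨ht, hθ⟩) hJ hx hy
  have harea : volume (F '' (Ioo x₀ x₁ ×ℂ Ioo α β)) ≤ ENNReal.ofReal (Real.pi * M ^ 2) := by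
    refine (measure_mono (hM.image_subset.trans
      (closedBall_subset_closedBall (le_abs_self M)))).trans_eq ?_
    rw [Complex.volume_closedBall, ← ENNReal.ofReal_pow (abs_nonneg M), sq_abs, mul_comm Real.pi,
      ENNReal.ofReal_mul (sq_nonneg M), ← NNReal.coe_real_pi, ENNReal.ofReal_coe_nnreal]
  have hsq : ENNReal.ofReal (‖F ⟨y, θ⟩ - F ⟨x, θ⟩‖ ^ 2) ≤ ENNReal.ofReal (ε ^ 2) :=
    calc ENNReal.ofReal (‖F ⟨y, θ⟩ - F ⟨x, θ⟩‖ ^ 2) = ‖F ⟨y, θ⟩ - F ⟨x, θ⟩‖ₑ ^ 2 := by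
          rw [ENNReal.ofReal_pow (norm_nonneg _), ofReal_norm]
      _ ≤ ENNReal.ofReal (x₁ - x₀) *
          (ENNReal.ofReal (Real.pi * M ^ 2) / ENNReal.ofReal (β - α)) := hosc.trans (by gcongr)
      _ = ENNReal.ofReal ((x₁ - x₀) * (Real.pi * M ^ 2 / (β - α))) := by
          rw [← ENNReal.ofReal_div_of_pos (sub_pos.2 hαβ),
            ← ENNReal.ofReal_mul (sub_nonneg.2 (hx.1.trans hx.2))]
      _ ≤ ENNReal.ofReal (ε ^ 2) := ENNReal.ofReal_le_ofReal (by
          rw [mul_div_assoc', div_le_iff₀ (sub_pos.2 hαβ)]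
          linarith)
  exact (sq_le_sq₀ (norm_nonneg _) hε).1 ((ENNReal.ofReal_le_ofReal_iff (sq_nonneg ε)).1 hsq)

end LengthArea

section ConnectedAtScale

variable {X : Type*}

/-- A quantitative form of uniform local connectivity: any two points of `K` at distance less
than `η` lie in a connected subset of `K` contained in the `ε`-ball around the first one. -/
def IsConnectedAtScale [PseudoMetricSpace X] (K : Set X) (η ε : ℝ) : Prop :=
  ∀ p ∈ K, ∀ q ∈ K, dist p q < η →
    ∃ B ⊆ K, IsPreconnected B ∧ p ∈ B ∧ q ∈ B ∧ B ⊆ ball p ε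

theorem IsConnectedAtScale.image [PseudoMetricSpace X] {K : Set X} {η ε e : ℝ}
    (hK : IsConnectedAtScale K η ε) {h : X → X} (hh : ContinuousOn h K)
    (hclose : ∀ x ∈ K, dist (h x) x ≤ e) :
    IsConnectedAtScale (h '' K) (η - 2 * e) (ε + 2 * e) := by
  rintro _ ⟨p, hp, rfl⟩ _ ⟨q, hq, rfl⟩ hpq
  have hpq' : dist p q < η := by
    linarith [dist_triangle4_left (h p) p q (h q), dist_triangle4 p (h p) (h q) q,
      hclose p hp, hclose q hq, dist_comm p (h p)]
  obtain ⟨B, hBK, hB, hpB, hqB, hBp⟩ := hK p hp q hq hpq'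
  refine ⟨h '' B, image_mono hBK, hB.image _ (hh.mono hBK), mem_image_of_mem _ hpB,
    mem_image_of_mem _ hqB, ?_⟩
  rintro _ ⟨u, hu, rfl⟩
  rw [mem_ball]
  linarith [dist_triangle4 (h u) u p (h p), hclose u (hBK hu), mem_ball.1 (hBp hu), hclose p hp,
    dist_comm p (h p)]

theorem exists_pos_forall_dist_lt_exists_map_eq {Y : Type*} [PseudoMetricSpace X] [MetricSpace Y]
    {g : X → Y} {S : Set X} (hS : IsCompact S) (hg : ContinuousOn g S) {τ : ℝ} (hτ : 0 < τ) :
    ∃ η > 0, ∀ s ∈ S, ∀ t ∈ S, dist (g s) (g t) < η →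
      ∃ s' ∈ S, ∃ t' ∈ S, g s' = g t' ∧ dist s s' < τ ∧ dist t t' < τ := by
  set Z : Set (X × X) := {x | x ∈ S ×ˢ S ∧ g x.1 = g x.2}
  have hcont : ContinuousOn (fun x : X × X => dist (g x.1) (g x.2)) (S ×ˢ S) :=
    continuous_dist.comp_continuousOn <| (hg.comp continuousOn_fst fun _ hx => hx.1).prodMk
      (hg.comp continuousOn_snd fun _ hx => hx.2)
  obtain ⟨η, hη, hle⟩ := ((hS.prod hS).diff isOpen_thickening).exists_forall_le'
    (hcont.mono sdiff_subset) (a := 0) fun x hx =>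
      dist_pos.2 fun h => hx.2 (self_subset_thickening hτ Z ⟨hx.1, h⟩)
  refine ⟨η, hη, fun s hs t ht hlt => ?_⟩
  have hmem : (s, t) ∈ thickening τ Z := by
    by_contra hfar
    exact (hle (s, t) ⟨⟨hs, ht⟩, hfar⟩).not_gt hlt
  obtain ⟨⟨s', t'⟩, ⟨⟨hs', ht'⟩, heq⟩, hd⟩ := mem_thickening_iff.1 hmem
  rw [Prod.dist_eq, max_lt_iff] at hd
  exact ⟨s', hs', t', ht', heq, hd⟩

theorem exists_pos_isConnectedAtScale_image_Icc [MetricSpace X] {g : ℝ → X} {a b ε : ℝ}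
    (hg : ContinuousOn g (Icc a b)) (hε : 0 < ε) :
    ∃ η > 0, IsConnectedAtScale (g '' Icc a b) η ε := by
  obtain ⟨τ, hτ, hunif⟩ := Metric.uniformContinuousOn_iff.1
    (isCompact_Icc.uniformContinuousOn_of_continuous hg) (ε / 2) (half_pos hε)
  obtain ⟨η, hη, hnear⟩ := exists_pos_forall_dist_lt_exists_map_eq isCompact_Icc hg hτ
  refine ⟨η, hη, ?_⟩
  rintro _ ⟨s, hs, rfl⟩ _ ⟨t, ht, rfl⟩ hst
  obtain ⟨s', hs', t', ht', heq, hss', htt'⟩ := hnear s hs t ht hst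
  have hsub : ∀ {u v : ℝ}, u ∈ Icc a b → v ∈ Icc a b → uIcc u v ⊆ Icc a b :=
    fun hu hv => ordConnected_Icc.uIcc_subset hu hv
  have hosc : ∀ {u v x : ℝ}, u ∈ Icc a b → v ∈ Icc a b → dist u v < τ → x ∈ uIcc u v →
      dist (g x) (g v) < ε / 2 := fun hu hv huv hx =>
    hunif _ (hsub hu hv hx) _ hv <| by
      rw [Real.dist_eq, abs_sub_comm]
      exact (abs_sub_right_of_mem_uIcc hx).trans_lt (by rwa [← Real.dist_eq, dist_comm])
  refine ⟨g '' uIcc s s' ∪ g '' uIcc t t',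
    union_subset (image_mono (hsub hs hs')) (image_mono (hsub ht ht')),
    (isPreconnected_uIcc.image _ (hg.mono (hsub hs hs'))).union (g s')
      ⟨s', right_mem_uIcc, rfl⟩ ⟨t', right_mem_uIcc, heq.symm⟩
      (isPreconnected_uIcc.image _ (hg.mono (hsub ht ht'))),
    Or.inl ⟨s, left_mem_uIcc, rfl⟩, Or.inr ⟨t, left_mem_uIcc, rfl⟩, ?_⟩
  have hs's : dist (g s') (g s) < ε / 2 := dist_comm (g s) (g s') ▸ hosc hs hs' hss' left_mem_uIcc
  rintro _ (⟨x, hx, rfl⟩ | ⟨x, hx, rfl⟩) <;> rw [mem_ball]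
  · linarith [dist_triangle (g x) (g s') (g s), hosc hs hs' hss' hx]
  · linarith [dist_triangle (g x) (g s') (g s), heq ▸ hosc ht ht' htt' hx]

end ConnectedAtScale

namespace IsRiemannMap

variable {f : ℂ → ℂ} {W : Set ℂ}

theorem frontier_eq_image_sphere (hf : IsRiemannMap f W) : frontier W = f '' sphere 0 1 := by
  refine Subset.antisymm (fun w hw => ?_) (image_subset_iff.2 fun _ => hf.map_mem_frontier)
  have hcl : closure W ⊆ f '' closure (ball 0 1) :=
    closure_minimal (hf.image_eq ▸ image_mono subset_closure)
      (isCompact_closure_unitBall.image_of_continuousOn hf.continuousOn).isClosed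
  obtain ⟨z, hz, rfl⟩ := hcl hw.1
  rw [closure_ball _ one_ne_zero] at hz
  refine mem_image_of_mem f (closedBall_sdiff_ball (x := (0 : ℂ)) (ε := 1) ▸ ⟨hz, fun hzb => ?_⟩)
  exact disjoint_left.1 (disjoint_frontier_iff_isOpen.2 hf.isOpen) hw (hf.mapsTo hzb)

theorem exists_pos_isConnectedAtScale_frontier (hf : IsRiemannMap f W) {ε : ℝ} (hε : 0 < ε) :
    ∃ η > 0, IsConnectedAtScale (frontier W) η ε := by
  have hcircle : sphere (0 : ℂ) 1 = circleMap 0 1 '' Icc 0 (2 * Real.pi) := by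
    refine Subset.antisymm ?_ (image_subset_iff.2 fun θ _ => circleMap_mem_sphere 0 zero_le_one θ)
    rw [← abs_one (α := ℝ), ← image_circleMap_Ioc, abs_one]
    exact image_mono Ioc_subset_Icc_self
  rw [hf.frontier_eq_image_sphere, hcircle, ← image_comp]
  refine exists_pos_isConnectedAtScale_image_Icc (hf.continuousOn.comp
    (continuous_circleMap 0 1).continuousOn fun θ _ => ?_) hε
  rw [closure_ball _ one_ne_zero]
  exact circleMap_mem_closedBall 0 zero_le_one θ

end IsRiemannMap

section LogPolar

theorem lipschitzOnWith_exp_re_nonpos : LipschitzOnWith 1 Complex.exp {s | s.re ≤ 0} :=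
  (convex_halfSpace_re_le 0).lipschitzOnWith_of_nnnorm_hasDerivWithin_le
    (fun s _ => (Complex.hasDerivAt_exp s).hasDerivWithinAt) fun s hs => by
      rw [← NNReal.coe_le_coe, coe_nnnorm, Complex.norm_exp, NNReal.coe_one]
      exact Real.exp_le_one_iff.2 hs

theorem injOn_exp_reProdIm_Ioo {S : Set ℝ} {α β : ℝ} (h : β - α ≤ 2 * Real.pi) :
    InjOn Complex.exp (S ×ℂ Ioo α β) := by
  intro s hs t ht hst
  obtain ⟨n, hn⟩ := Complex.exp_eq_exp_iff_exists_int.1 hst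
  have him : s.im - t.im = n * (2 * Real.pi) := by
    rw [hn]
    simp
  have hlt : |(n : ℝ)| * (2 * Real.pi) < 1 * (2 * Real.pi) := by
    rw [← abs_of_pos Real.two_pi_pos, ← abs_mul, ← him, abs_of_pos Real.two_pi_pos, abs_lt]
    constructor <;> linarith [hs.2.1, hs.2.2, ht.2.1, ht.2.2]
  have hn0 : n = 0 :=
    Int.abs_lt_one_iff.1 (by exact_mod_cast lt_of_mul_lt_mul_right hlt Real.two_pi_pos.le)
  simpa only [hn0, Int.cast_zero, zero_mul, add_zero] using hn

theorem mapsTo_exp_re_neg_ball : MapsTo Complex.exp {s | s.re < 0} (ball 0 1) := fun s hs => by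
  rw [mem_ball_zero_iff, Complex.norm_exp]
  exact Real.exp_lt_one_iff.2 hs

theorem mapsTo_exp_re_nonpos_closure_ball :
    MapsTo Complex.exp {s | s.re ≤ 0} (closure (ball 0 1)) := fun s hs => by
  rw [closure_ball _ one_ne_zero, mem_closedBall_zero_iff, Complex.norm_exp]
  exact Real.exp_le_one_iff.2 hs

namespace IsRiemannMap

variable {f : ℂ → ℂ} {W : Set ℂ}

theorem uniformContinuousOn_comp_exp (hf : IsRiemannMap f W) :
    UniformContinuousOn (f ∘ Complex.exp) {s | s.re ≤ 0} :=
  hf.uniformContinuousOn.comp lipschitzOnWith_exp_re_nonpos.uniformContinuousOn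
    mapsTo_exp_re_nonpos_closure_ball

theorem differentiableOn_comp_exp (hf : IsRiemannMap f W) :
    DifferentiableOn ℂ (f ∘ Complex.exp) {s | s.re < 0} :=
  hf.differentiableOn.comp Complex.differentiable_exp.differentiableOn mapsTo_exp_re_neg_ball

theorem injOn_comp_exp (hf : IsRiemannMap f W) {α β : ℝ} (h : β - α ≤ 2 * Real.pi) :
    InjOn (f ∘ Complex.exp) (Iio 0 ×ℂ Ioo α β) :=
  hf.injOn.comp (injOn_exp_reProdIm_Ioo h) fun _ hs => mapsTo_exp_re_neg_ball hs.1

theorem map_exp_mem_frontier (hf : IsRiemannMap f W) {s : ℂ} (hs : s.re = 0) :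
    f (Complex.exp s) ∈ frontier W :=
  hf.map_mem_frontier (by rw [mem_sphere_zero_iff_norm, Complex.norm_exp, hs, Real.exp_zero])

theorem map_exp_ne_map_zero (hf : IsRiemannMap f W) {s : ℂ} (hs : s.re ≤ 0) :
    f (Complex.exp s) ≠ f 0 := by
  rcases hs.lt_or_eq with hs | hs
  · exact hf.injOn.ne (mapsTo_exp_re_neg_ball hs) zero_mem_unitBall (Complex.exp_ne_zero s)
  · exact (disjoint_frontier_iff_isOpen.2 hf.isOpen).ne_of_mem (hf.map_exp_mem_frontier hs)
      (hf.mapsTo zero_mem_unitBall)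

theorem exists_radius_mapsTo_closedBall (hf : IsRiemannMap f W) {c : ℂ} {x₀ α β e M : ℝ}
    (hx₀ : x₀ ≤ 0) (hαβ : α < β) (hβα : β - α ≤ 2 * Real.pi) (he : 0 ≤ e)
    (hM : W ⊆ closedBall 0 M) (hthin : Real.pi * M ^ 2 * -x₀ ≤ e ^ 2 * (β - α))
    (hinner : ∀ θ ∈ Ioo α β, f (Complex.exp ⟨x₀, θ⟩) ∈ closedBall c e) :
    ∃ θ ∈ Ioo α β, ∀ x ∈ Icc x₀ 0, f (Complex.exp ⟨x, θ⟩) ∈ closedBall c (2 * e) := by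
  obtain ⟨θ, hθ, hosc⟩ := exists_norm_sub_le_of_injOn_reProdIm (F := f ∘ Complex.exp) hαβ he
    (hf.differentiableOn_comp_exp.mono fun s hs => hs.1.2)
    ((hf.injOn_comp_exp hβα).mono (inter_subset_inter_left _ fun _ hs => hs.2))
    (hf.uniformContinuousOn_comp_exp.continuousOn.mono fun s hs => hs.1.2)
    (fun s hs => hM (hf.mapsTo (mapsTo_exp_re_neg_ball hs.1.2)))
    (by rwa [zero_sub])
  refine ⟨θ, hθ, fun x hx => ?_⟩
  have hx₀x : dist (f (Complex.exp ⟨x, θ⟩)) (f (Complex.exp ⟨x₀, θ⟩)) ≤ e :=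
    (dist_eq_norm _ _).trans_le (hosc x₀ (left_mem_Icc.2 hx₀) x hx)
  rw [mem_closedBall]
  linarith [dist_triangle (f (Complex.exp ⟨x, θ⟩)) (f (Complex.exp ⟨x₀, θ⟩)) c,
    mem_closedBall.1 (hinner θ hθ)]

end IsRiemannMap

end LogPolar

theorem mem_of_mapsTo_rectangle_sides {B K E : Set ℂ} {F : ℂ → ℂ} {a z : ℂ} {x₀ x₁ θ₁ θ₂ : ℝ}
    (hF : ContinuousOn F (Icc x₀ x₁ ×ℂ Icc θ₁ θ₂))
    (hFd : DifferentiableOn ℂ F (Ioo x₀ x₁ ×ℂ Ioo θ₁ θ₂))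
    (hinj : InjOn F (Ioo x₀ x₁ ×ℂ Ioo θ₁ θ₂)) (ha : a ∈ Ioo x₀ x₁ ×ℂ Ioo θ₁ θ₂)
    (hK : IsClosed K) (hE : Convex ℝ E) (hright : ∀ θ ∈ Icc θ₁ θ₂, F ⟨x₁, θ⟩ ∈ K)
    (hleft : ∀ θ ∈ Icc θ₁ θ₂, F ⟨x₀, θ⟩ ∈ E) (hbot : ∀ x ∈ Icc x₀ x₁, F ⟨x, θ₁⟩ ∈ E)
    (htop : ∀ x ∈ Icc x₀ x₁, F ⟨x, θ₂⟩ ∈ E) (hB : IsPreconnected B) (hBK : B ⊆ K) (hBE : B ⊆ E)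
    (hB₁ : F ⟨x₁, θ₁⟩ ∈ B) (hB₂ : F ⟨x₁, θ₂⟩ ∈ B) (hzE : z ∉ E)
    (hz : ∀ s ∈ Icc x₀ x₁ ×ℂ Icc θ₁ θ₂, F s ≠ z) (haK : F a ∈ connectedComponentIn Kᶜ z) :
    F a ∈ E := by
  have hx : x₀ < x₁ := ha.1.1.trans ha.1.2
  have hθ : θ₁ < θ₂ := ha.2.1.trans ha.2.2
  have hint : interior (Icc x₀ x₁ ×ℂ Icc θ₁ θ₂) = Ioo x₀ x₁ ×ℂ Ioo θ₁ θ₂ := by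
    rw [Complex.interior_reProdIm, interior_Icc, interior_Icc]
  have hcompact : IsCompact (Icc x₀ x₁ ×ℂ Icc θ₁ θ₂) := isCompact_Icc.reProdIm isCompact_Icc
  rw [← hint] at hFd hinj ha
  refine mem_of_frontier_subset_union (A := {x₁} ×ℂ Icc θ₁ θ₂)
    (C := {x₀} ×ℂ Icc θ₁ θ₂ ∪ Icc x₀ x₁ ×ℂ {θ₁, θ₂})
    (((convex_Icc x₀ x₁).linear_preimage Complex.reLm).inter
      ((convex_Icc θ₁ θ₂).linear_preimage Complex.imLm)) hcompact hF hFd hinj ha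
    (isClosed_singleton.reProdIm isClosed_Icc)
    ((isClosed_singleton.reProdIm isClosed_Icc).union
      (isClosed_Icc.reProdIm (Set.toFinite _).isClosed))
    ?_ ?_ ?_ hK hE ?_ ?_ hB hBK hBE ?_ hzE hz haK
  · rintro s ⟨rfl, hs⟩
    exact ⟨right_mem_Icc.2 hx.le, hs⟩
  · rintro ⟨x, θ⟩ (⟨rfl, hs⟩ | ⟨hs, rfl | rfl⟩)
    exacts [⟨left_mem_Icc.2 hx.le, hs⟩, ⟨hs, left_mem_Icc.2 hθ.le⟩, ⟨hs, right_mem_Icc.2 hθ.le⟩]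
  · intro s hs
    obtain ⟨hre, him⟩ := hcompact.isClosed.frontier_subset hs
    by_contra hside
    refine hs.2 (hint ▸ ⟨⟨hre.1.lt_of_ne fun h => hside ?_, hre.2.lt_of_ne fun h => hside ?_⟩,
      him.1.lt_of_ne fun h => hside ?_, him.2.lt_of_ne fun h => hside ?_⟩)
    exacts [Or.inr (Or.inl ⟨h.symm, him⟩), Or.inl ⟨h, him⟩,
      Or.inr (Or.inr ⟨hre, Or.inl h.symm⟩), Or.inr (Or.inr ⟨hre, Or.inr h⟩)]
  · rintro ⟨_, θ⟩ ⟨rfl, hs⟩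
    exact hright θ hs
  · rintro ⟨x, θ⟩ (⟨rfl, hs⟩ | ⟨hs, rfl | rfl⟩)
    exacts [hleft θ hs, hbot x hs, htop x hs]
  · rintro ⟨_, θ⟩ ⟨⟨rfl, -⟩, ⟨h, -⟩ | ⟨-, rfl | rfl⟩⟩
    exacts [absurd h hx.ne', hB₁, hB₂]

theorem IsRiemannMap.mem_closedBall_of_circle_arc {f : ℂ → ℂ} {K : Set ℂ} {z₀ c : ℂ}
    {M x₀ x Δ θ₀ e η ω : ℝ} (hK : IsClosed K) (hf : IsRiemannMap f (connectedComponentIn Kᶜ z₀))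
    (hf0 : f 0 = z₀) (hM : connectedComponentIn Kᶜ z₀ ⊆ closedBall 0 M) (hΔ : 0 < Δ) (hΔ1 : Δ ≤ 1)
    (he : 0 ≤ e) (hthin : Real.pi * M ^ 2 * -x₀ ≤ e ^ 2 * Δ)
    (hinner : ∀ θ ∈ Icc (θ₀ - 2 * Δ) (θ₀ + 2 * Δ), f (Complex.exp ⟨x₀, θ⟩) ∈ closedBall c e)
    (hlc : IsConnectedAtScale K η ω) (hη : 4 * e < η)
    (hz₀ : z₀ ∉ closedBall c (ω + 2 * e)) (hx : x ∈ Ioo x₀ 0) :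
    f (Complex.exp ⟨x, θ₀⟩) ∈ closedBall c (ω + 2 * e) := by
  have hx₀ : x₀ ≤ 0 := (hx.1.trans hx.2).le
  have hpi := Real.pi_gt_three
  obtain ⟨θ₁, hθ₁, hF₁⟩ := hf.exists_radius_mapsTo_closedBall (α := θ₀ - 2 * Δ) (β := θ₀ - Δ) hx₀
    (by linarith) (by linarith) he hM (hthin.trans_eq (by ring))
    fun θ hθ => hinner θ ⟨hθ.1.le, by linarith [hθ.2]⟩
  obtain ⟨θ₂, hθ₂, hF₂⟩ := hf.exists_radius_mapsTo_closedBall (α := θ₀ + Δ) (β := θ₀ + 2 * Δ) hx₀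
    (by linarith) (by linarith) he hM (hthin.trans_eq (by ring))
    fun θ hθ => hinner θ ⟨by linarith [hθ.1], hθ.2.le⟩
  have hFK : ∀ s : ℂ, s.re = 0 → f (Complex.exp s) ∈ K := fun s hs =>
    frontier_connectedComponentIn_compl_subset hK z₀ (hf.map_exp_mem_frontier hs)
  have hp := hF₁ 0 (right_mem_Icc.2 hx₀)
  have hq := hF₂ 0 (right_mem_Icc.2 hx₀)
  obtain ⟨B, hBK, hB, hB₁, hB₂, hBω⟩ := hlc _ (hFK ⟨0, θ₁⟩ rfl) _ (hFK ⟨0, θ₂⟩ rfl) <|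
    (dist_triangle_right _ _ c).trans_lt (by linarith [mem_closedBall.1 hp, mem_closedBall.1 hq])
  have hω : 0 < ω := pos_of_mem_ball (hBω hB₁)
  refine mem_of_mapsTo_rectangle_sides (F := f ∘ Complex.exp) (z := z₀) (B := B) (x₀ := x₀)
    (x₁ := 0) (θ₁ := θ₁) (θ₂ := θ₂)
    (hf.uniformContinuousOn_comp_exp.continuousOn.mono fun s hs => hs.1.2)
    (hf.differentiableOn_comp_exp.mono fun s hs => hs.1.2)
    ((hf.injOn_comp_exp (by linarith [hθ₁.1, hθ₂.2])).mono
      (inter_subset_inter_left _ fun _ hs => hs.2))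
    ⟨hx, hθ₁.2.trans (by simpa using hΔ), hθ₂.1.trans' (by simpa using hΔ)⟩ hK
    (convex_closedBall _ _)
    (fun θ _ => hFK _ rfl) (fun θ hθ => ?_)
    (fun x hx => closedBall_subset_closedBall (by linarith) (hF₁ x hx))
    (fun x hx => closedBall_subset_closedBall (by linarith) (hF₂ x hx)) hB hBK ?_ hB₁ hB₂ hz₀ ?_
    (hf.mapsTo (mapsTo_exp_re_neg_ball hx.2))
  · exact closedBall_subset_closedBall (by linarith)
      (hinner θ ⟨hθ₁.1.le.trans hθ.1, hθ.2.trans hθ₂.2.le⟩)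
  · exact (hBω.trans (ball_subset_ball' (by linarith [mem_closedBall.1 hp]))).trans
      ball_subset_closedBall
  · exact fun s hs => hf0 ▸ hf.map_exp_ne_map_zero hs.1.2

theorem IsNormalizedRiemannMap.dist_le_of_exp_neg_lt_norm {φ f : ℂ → ℂ} {Ω K : Set ℂ} {z₀ : ℂ}
    {d e η ω τ Δ y M : ℝ} (hφ : IsNormalizedRiemannMap φ Ω z₀) (hK : IsClosed K)
    (hf : IsNormalizedRiemannMap f (connectedComponentIn Kᶜ z₀) z₀)
    (hM : connectedComponentIn Kᶜ z₀ ⊆ closedBall 0 M) (hd : ball z₀ d ⊆ Ω)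
    (hτ : ∀ s : ℂ, s.re ≤ 0 → ∀ t : ℂ, t.re ≤ 0 → dist s t < τ →
      dist (φ (Complex.exp s)) (φ (Complex.exp t)) < e)
    (hΔ : 0 < Δ) (hΔ1 : Δ ≤ 1) (hΔτ : 2 * Δ < τ) (hyτ : y < τ)
    (hthin : Real.pi * M ^ 2 * y ≤ (2 * e) ^ 2 * Δ)
    (hinner : ∀ z : ℂ, ‖z‖ ≤ Real.exp (-y) → dist (f z) (φ z) ≤ e)
    (hlc : IsConnectedAtScale K η ω) (hη : 8 * e < η) (hωd : ω + 5 * e ≤ d) {z : ℂ}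
    (hz : z ∈ ball (0 : ℂ) 1) (hzy : Real.exp (-y) < ‖z‖) : dist (f z) (φ z) ≤ ω + 5 * e := by
  have hz0 : z ≠ 0 := norm_pos_iff.1 ((Real.exp_pos _).trans hzy)
  have hzexp : Complex.exp ⟨Real.log ‖z‖, z.arg⟩ = z := by
    rw [← Complex.log_re, ← Complex.log_im, Complex.eta, Complex.exp_log hz0]
  have hx : Real.log ‖z‖ ∈ Ioo (-y) 0 :=
    ⟨(Real.lt_log_iff_exp_lt (norm_pos_iff.2 hz0)).2 hzy,
      Real.log_neg (norm_pos_iff.2 hz0) (mem_ball_zero_iff.1 hz)⟩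
  have hy : -y < 0 := hx.1.trans hx.2
  set c := φ (Complex.exp ⟨-y, z.arg⟩)
  have hradial : ∀ x ∈ Icc (-y) 0, dist (φ (Complex.exp ⟨x, z.arg⟩)) c < e := fun x hx =>
    hτ ⟨x, z.arg⟩ hx.2 ⟨-y, z.arg⟩ hy.le <| by
      rw [Complex.dist_of_im_eq (by rfl), Real.dist_eq, abs_lt]
      constructor <;> linarith [hx.1, hx.2]
  have he : 0 < e := dist_nonneg.trans_lt (hradial 0 (right_mem_Icc.2 hy.le))
  have hz₀ : z₀ ∉ closedBall c (ω + 2 * (2 * e)) := fun hmem => by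
    refine disjoint_left.1 (disjoint_frontier_iff_isOpen.2 hφ.isOpen)
      (hφ.map_exp_mem_frontier (s := ⟨0, z.arg⟩) rfl) (hd (mem_ball.2 ?_))
    linarith [dist_triangle_right (φ (Complex.exp ⟨0, z.arg⟩)) z₀ c, mem_closedBall.1 hmem,
      hradial 0 (right_mem_Icc.2 hy.le)]
  have hfz := hf.mem_closedBall_of_circle_arc (c := c) (θ₀ := z.arg) hK hf.map_zero hM hΔ hΔ1
    (by positivity) (by rwa [neg_neg]) (fun θ hθ => ?_) hlc (by linarith) hz₀ hx
  · rw [hzexp, mem_closedBall] at hfz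
    have hφz := hradial _ (Ioo_subset_Icc_self hx)
    rw [hzexp] at hφz
    linarith [dist_triangle_right (f z) (φ z) c]
  · have hangular : dist (φ (Complex.exp ⟨-y, θ⟩)) c < e := hτ _ hy.le _ hy.le <| by
      rw [Complex.dist_of_re_eq (by rfl), Real.dist_eq, abs_lt]
      constructor <;> linarith [hθ.1, hθ.2]
    have hfφ := hinner (Complex.exp ⟨-y, θ⟩) (by rw [Complex.norm_exp])
    rw [mem_closedBall]
    linarith [dist_triangle (f (Complex.exp ⟨-y, θ⟩)) (φ (Complex.exp ⟨-y, θ⟩)) c]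

theorem IsNormalizedRiemannMap.exists_pos_forall_dist_lt {φ : ℂ → ℂ} {Ω : Set ℂ} {z₀ : ℂ}
    (hφ : IsNormalizedRiemannMap φ Ω z₀) {ε : ℝ} (hε : 0 < ε) :
    ∃ δ > 0, ∀ h f : ℂ → ℂ, ContinuousOn h (frontier Ω) → (∀ x ∈ frontier Ω, dist (h x) x < δ) →
      IsNormalizedRiemannMap f (connectedComponentIn (h '' frontier Ω)ᶜ z₀) z₀ →
      ∀ z ∈ closure (ball (0 : ℂ) 1), dist (f z) (φ z) < ε := by
  obtain ⟨M, hM0, hM⟩ := hφ.isCompact_frontier.isBounded.subset_closedBall_lt 0 0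
  obtain ⟨d, hd0, hd⟩ := Metric.isOpen_iff.1 hφ.isOpen z₀ hφ.mem
  set ε' := min ε d
  have : 0 < ε' := lt_min hε hd0
  obtain ⟨η, hη0, hη⟩ := hφ.exists_pos_isConnectedAtScale_frontier (ε := ε' / 16) (by positivity)
  set e := min (ε' / 16) (η / 16)
  have he0 : 0 < e := by positivity
  have heε : e ≤ ε' / 16 := min_le_left _ _
  have heη : e ≤ η / 16 := min_le_right _ _
  obtain ⟨τ, hτ0, hτ⟩ := Metric.uniformContinuousOn_iff.1 hφ.uniformContinuousOn_comp_exp e he0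
  set Δ := min 1 (τ / 4)
  have hΔ0 : 0 < Δ := by positivity
  set y := min (τ / 2) ((2 * e) ^ 2 * Δ / (Real.pi * (M + 1) ^ 2))
  have hy0 : 0 < y := by positivity
  have hthin : Real.pi * (M + 1) ^ 2 * y ≤ (2 * e) ^ 2 * Δ :=
    (le_div_iff₀' (by positivity)).1 (min_le_right _ _)
  obtain ⟨δ₀, hδ₀, hloc⟩ := hφ.exists_pos_norm_sub_lt_of_norm_le (ρ := Real.exp (-y))
    (Real.exp_lt_one_iff.2 (neg_lt_zero.2 hy0)) he0
  refine ⟨min δ₀ (min e 1), by positivity, fun h f hh hclose hf z hz => ?_⟩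
  simp only [lt_min_iff] at hclose
  have hK := hφ.isCompact_frontier.image_of_continuousOn hh
  have hWM := subset_closedBall_of_frontier_subset hf.isBounded <|
    (frontier_connectedComponentIn_compl_subset hK.isClosed z₀).trans <|
      image_subset_closedBall_add hM fun x hx => (hclose x hx).2.2.le
  have hlc := hη.image hh fun x hx => (hclose x hx).2.1.le
  have hinner : ∀ w : ℂ, ‖w‖ ≤ Real.exp (-y) → dist (f w) (φ w) ≤ e := fun w hw =>
    (dist_eq_norm _ _).trans_le (hloc h f hh (fun x hx => (hclose x hx).1) hf w hw).le
  have hball : ∀ w ∈ ball (0 : ℂ) 1, dist (f w) (φ w) ≤ ε' / 2 := fun w hw => by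
    rcases le_or_gt ‖w‖ (Real.exp (-y)) with hwy | hwy
    · linarith [hinner w hwy]
    · have hε'd : ε' ≤ d := min_le_right _ _
      have hΔτ : Δ ≤ τ / 4 := min_le_right _ _
      have hyτ : y ≤ τ / 2 := min_le_left _ _
      linarith [hφ.dist_le_of_exp_neg_lt_norm hK.isClosed hf hWM hd hτ hΔ0 (min_le_left _ _)
        (by linarith) (by linarith) hthin hinner hlc (by linarith) (by linarith) hw hwy]
  have hdist : ContinuousOn (fun w => dist (f w) (φ w)) (closure (ball (0 : ℂ) 1)) :=
    continuous_dist.comp_continuousOn (hf.continuousOn.prodMk hφ.continuousOn)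
  linarith [le_on_closure hball hdist continuousOn_const hz, min_le_left ε d]

theorem IsNormalizedRiemannMap.eqOn {φ ψ : ℂ → ℂ} {Ω : Set ℂ} {z₀ : ℂ}
    (hφ : IsNormalizedRiemannMap φ Ω z₀) (hψ : IsNormalizedRiemannMap ψ Ω z₀) :
    EqOn ψ φ (closure (ball 0 1)) := by
  intro z hz
  refine dist_le_zero.1 (le_of_forall_pos_lt_add fun ε hε => ?_)
  obtain ⟨δ, hδ, hstable⟩ := hφ.exists_pos_forall_dist_lt hε
  rw [zero_add]
  refine hstable id ψ continuousOn_id (fun x _ => (dist_self x).trans_lt hδ) ?_ z hz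
  rwa [image_id, connectedComponentIn_compl_frontier_eq hφ.isOpen hφ.isPreconnected hφ.mem]

theorem riemann_map_stability_general (Ω : Set ℂ) (z₀ : ℂ) (ε : ℝ) (hε : 0 < ε) :
    ∃ δ > 0, ∀ h : ℂ → ℂ, ContinuousOn h (frontier Ω) → (∀ z ∈ frontier Ω, dist (h z) z < δ) →
      ∀ φ φh : ℂ → ℂ, IsNormalizedRiemannMap φ Ω z₀ →
        IsNormalizedRiemannMap φh (connectedComponentIn (h '' frontier Ω)ᶜ z₀) z₀ →
        ∀ z ∈ closure (ball (0 : ℂ) 1), ‖φ z - φh z‖ < ε := by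
  by_cases hex : ∃ φ₀, IsNormalizedRiemannMap φ₀ Ω z₀
  · obtain ⟨φ₀, hφ₀⟩ := hex
    obtain ⟨δ, hδ, hstable⟩ := hφ₀.exists_pos_forall_dist_lt hε
    refine ⟨δ, hδ, fun h hh hclose φ φh hφ hφh z hz => ?_⟩
    rw [hφ₀.eqOn hφ hz, ← dist_eq_norm, dist_comm]
    exact hstable h φh hh hclose hφh z hz
  · exact ⟨1, one_pos, fun _ _ _ φ _ hφ => absurd ⟨φ, hφ⟩ hex⟩

/-- Stability of normalized Riemann maps under small displacements of the boundary:
for every `ε > 0` there is `δ > 0` such that any `δ`-displacement `h` of `γ = ∂Ω`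
changes the normalized Riemann map of the component of the complement of `h(γ)`
containing `z₀` by less than `ε`, uniformly on the closed unit disc. -/
theorem riemann_map_stability
    (Ω : Set ℂ) (hΩ : IsLemniscateDomain Ω) (hbdd : Bornology.IsBounded Ω)
    (z₀ : ℂ) (hz₀ : z₀ ∈ Ω) (ε : ℝ) (hε : 0 < ε) :
    ∃ δ > 0, ∀ h : ℂ → ℂ,
      ContinuousOn h (frontier Ω) → Set.InjOn h (frontier Ω) →
      (∀ z ∈ frontier Ω, dist (h z) z < δ) →
      ∀ φ φh : ℂ → ℂ,
        (ContinuousOn φ (closure (ball (0 : ℂ) 1)) ∧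
         DifferentiableOn ℂ φ (ball (0 : ℂ) 1) ∧
         Set.InjOn φ (ball (0 : ℂ) 1) ∧
         φ '' ball (0 : ℂ) 1 = Ω ∧ φ 0 = z₀ ∧
         ∃ a : ℝ, 0 < a ∧ deriv φ 0 = (a : ℂ)) →
        (ContinuousOn φh (closure (ball (0 : ℂ) 1)) ∧
         DifferentiableOn ℂ φh (ball (0 : ℂ) 1) ∧
         Set.InjOn φh (ball (0 : ℂ) 1) ∧
         φh '' ball (0 : ℂ) 1 = connectedComponentIn (h '' frontier Ω)ᶜ z₀ ∧
         φh 0 = z₀ ∧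
         ∃ a : ℝ, 0 < a ∧ deriv φh 0 = (a : ℂ)) →
        ∀ z ∈ closure (ball (0 : ℂ) 1), ‖φ z - φh z‖ < ε := by
  obtain ⟨δ, hδ, hstable⟩ := riemann_map_stability_general Ω z₀ ε hε
  refine ⟨δ, hδ, fun h hh _ hclose φ φh hφ hφh => hstable h hh hclose φ φh ?_ ?_⟩
  · obtain ⟨hcont, hdiff, hinj, himage, hzero, hderiv⟩ := hφ
    exact ⟨⟨hcont, hdiff, hinj, himage⟩, hzero, hderiv⟩
  · obtain ⟨hcont, hdiff, hinj, himage, hzero, hderiv⟩ := hφh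
    exact ⟨⟨hcont, hdiff, hinj, himage⟩, hzero, hderiv⟩

end
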